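/- arXiv:2303.09157 — 2 statements merged into one kernel-verified Lean document; each statement's English description precedes it below -/
import Mathlib

section
/- (Alberti's rank one theorem.) Let n, k ∈ ℕ and let f ∈ BV(ℝⁿ;ℝᵏ). Then the matrix dDf/d|Df|(x) has rank one for |Dˢf|-a.e. x ∈ ℝⁿ, where Df = Dᵃf + Dˢf is the Lebesgue decomposition of Df with respect to the Lebesgue measure Lⁿ. -/
/-!
The proof is elementary: it uses neither blow-ups nor Fourier analysis nor rectifiability.

A nonzero matrix has rank one if and only if all its `2 × 2` minors vanish, so it suffices to show
that a minor of `σ`, on rows `j₁, j₂` and columns `l₁ ≠ l₂`, vanishes `ν`-a.e. on every Lebesgue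
null set `S`. Replacing the two components of `f` by rational linear combinations, one may restrict
to the set where the `2 × 2` block `q` is within `1/100` of the identity
(`measure_null_of_minor_ne_zero`). Split `ℝⁿ = Z × ℝ²`, the plane carrying the coordinates
`l₁, l₂`.

* Where `q₁₁ ≠ 0`, the measure `ν` does not charge sets `N × ℝ²` with `N` null in `Z`
  (`measure_inter_preimage_eq_zero`). So one can discard the points whose planar slice of `S` is not
  null, and by inner regularity it is enough to treat a compact set `K` on which `q` is close to the
  identity and all of whose planar slices are null.

* A compact null set in the plane admits smooth functions `a`, `b`, arbitrarily small in the sup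
  norm, with `0 ≤ ∂₁a ≤ 1`, `|∂₂a| ≤ 1`, `0 ≤ ∂₂b ≤ 1`, `|∂₁b| ≤ 1` and `∂₁a + ∂₂b ≥ 1` on the set
  (`exists_planar`). This comes from a combinatorial decomposition of the small squares that meet
  the set: `O(ε²/s²)` squares of side `s` split into two families, one of which contains only short
  chains in the direction of the first axis and the other only short chains in the direction of the
  second one (`exists_chain_split`). Short chains allow a function of slope one on the family whose
  total height is `O(ε)` (`exists_height`). A partition of unity in `Z` provides such functions for
  `K` (`exists_param`), with `∂₁a + ∂₂b ≥ 1/2` on `K`.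

* Symmetry of second derivatives gives `∂₂(q₁₁ ν) = ∂₁(q₁₂ ν)` and `∂₁(q₂₂ ν) = ∂₂(q₂₁ ν)`. Testing
  the second identity with `χ a` and the first with `χ b`, for a cutoff `χ` of `K`, shows that
  `∫_K ∂₁a dν` and `∫_K ∂₂b dν` are both at most `ν(K)/10` once `a` and `b` are small enough
  (`integral_on_compact_le`). Hence `ν(K)/2 ≤ ν(K)/5` and `ν(K) = 0` (`measure_compact_eq_zero`).
-/

open MeasureTheory Filter

noncomputable section

/-- `f ∈ BV(Ω; ℝᵏ)` for an open set `Ω ⊂ ℝⁿ`, presented through the polar decomposition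
`Df = σ |Df|` of its derivative measure: `ν` plays the role of the total variation measure
`|Df|` (a finite positive measure concentrated on `Ω`), and `σ = dDf/d|Df|` is the
Radon–Nikodym density, a matrix field of unit (Frobenius/Euclidean) norm `ν`-a.e.
The defining requirement is the integration-by-parts formula
`∫_Ω f_j ∂φ/∂y_l dLⁿ = −∫_Ω φ d(Df_j)_l = −∫_Ω φ σ_{jl} dν`
for all `φ ∈ C_c¹(Ω)`. -/
structure IsBVOn (n k : ℕ) (Ω : Set (EuclideanSpace ℝ (Fin n)))
    (f : EuclideanSpace ℝ (Fin n) → EuclideanSpace ℝ (Fin k))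
    (ν : Measure (EuclideanSpace ℝ (Fin n)))
    (σ : EuclideanSpace ℝ (Fin n) → Matrix (Fin k) (Fin n) ℝ) : Prop where
  /-- `f ∈ L¹(Ω;ℝᵏ)`. -/
  integrable : IntegrableOn f Ω volume
  /-- the total variation measure is finite -/
  finite : ν Set.univ < ⊤
  /-- the total variation measure is concentrated on `Ω` -/
  concentrated : ν Ωᶜ = 0
  /-- measurability of the density -/
  meas : ∀ j l, Measurable fun x => σ x j l
  /-- the density `dDf/d|Df|` has unit Euclidean (Frobenius) norm `|Df|`-a.e. -/
  unit : ∀ᵐ x ∂ν, ∑ j, ∑ l, (σ x j l) ^ 2 = 1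
  /-- integration by parts against `C_c¹(Ω)` test functions -/
  parts : ∀ φ : EuclideanSpace ℝ (Fin n) → ℝ, ContDiff ℝ 1 φ → HasCompactSupport φ →
    tsupport φ ⊆ Ω → ∀ j : Fin k, ∀ l : Fin n,
      ∫ x in Ω, f x j * fderiv ℝ φ x (EuclideanSpace.single l (1:ℝ)) ∂volume
        = - ∫ x, φ x * σ x j l ∂ν

open scoped Convolution ContDiff Topology Manifold

/-! ### Chains of lattice points -/

/-- Greedy decomposition of a finite set of lattice points. `P₁` is a union of `t` disjoint
horizontal chains (sets in which any two points differ more in the first coordinate than in the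
second) with more than `M` elements each, removed until no such chain is left. A vertical chain
meets every horizontal chain in at most one point, so it has at most `t` elements in `P₁`. -/
lemma exists_chain_split (M : ℕ) (P : Finset (ℤ × ℤ)) :
    ∃ P₁ ⊆ P,
      (∀ C ⊆ P \ P₁, (C : Set (ℤ × ℤ)).Pairwise (fun p q => |p.2 - q.2| < |p.1 - q.1|) →
        C.card ≤ M) ∧
      ∃ t : ℕ, t * (M + 1) ≤ P₁.card ∧
        ∀ C ⊆ P₁, (C : Set (ℤ × ℤ)).Pairwise (fun p q => |p.1 - q.1| < |p.2 - q.2|) →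
          C.card ≤ t := by
  classical
  induction P using Finset.strongInduction with
  | H P ih =>
    by_cases h : ∀ C ⊆ P, (C : Set (ℤ × ℤ)).Pairwise (fun p q => |p.2 - q.2| < |p.1 - q.1|) →
        C.card ≤ M
    · refine ⟨∅, by simp, by simpa using h, 0, by simp, ?_⟩
      intro C hC _
      simp [Finset.subset_empty.1 hC]
    · push Not at h
      obtain ⟨D, hDP, hD, hcard⟩ := h
      have hDne : D.Nonempty := Finset.card_pos.1 (by omega)
      obtain ⟨P₁, hP₁, h1, t, ht, h2⟩ := ih (P \ D) (Finset.sdiff_ssubset hDP hDne)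
      have hdisj : Disjoint P₁ D :=
        Finset.disjoint_of_subset_left hP₁ Finset.sdiff_disjoint
      refine ⟨P₁ ∪ D, Finset.union_subset (hP₁.trans Finset.sdiff_subset) hDP, ?_, t + 1, ?_, ?_⟩
      · intro C hC
        apply h1
        intro x hx
        have := hC hx
        simp only [Finset.mem_sdiff, Finset.mem_union, not_or] at this ⊢
        tauto
      · rw [Finset.card_union_of_disjoint hdisj]
        nlinarith
      · intro C hC hV
        have hsplit : C = (C ∩ P₁) ∪ (C ∩ D) := by
          rw [← Finset.inter_union_distrib_left]
          exact (Finset.inter_eq_left.2 hC).symm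
        have e1 : (C ∩ P₁).card ≤ t :=
          h2 _ Finset.inter_subset_right (hV.mono (by simp))
        have e2 : (C ∩ D).card ≤ 1 := by
          rw [Finset.card_le_one]
          intro p hp q hq
          by_contra hne
          simp only [Finset.mem_inter] at hp hq
          have a1 := hV hp.1 hq.1 hne
          have a2 := hD hp.2 hq.2 hne
          simp only at a1 a2
          omega
        rw [hsplit]
        exact (Finset.card_union_le _ _).trans (by omega)

/-- Let `A` be covered by the `2s`-neighbourhoods of the points `s q`, `q ∈ Q`, where horizontal
chains in `Q` have at most `M` elements. Then there is a function with values in `[0, 10 M s]`,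
nondecreasing in the first variable and with both slopes at most one, which grows with slope one
along horizontal segments contained in `A`. The last conjunct, vanishing to the left of `A`, serves
the induction on `M`: the lower `1`-Lipschitz envelope `G` of `A` has a strip of width `10 s` to its
right which is used for the first step of the function, and the part `A'` of `A` beyond that strip
only sees chains with one element less. -/
lemma exists_height (s : ℝ) (hs : 0 < s) (M : ℕ) : ∀ (Q : Set (ℤ × ℤ)) (A : Set (ℝ × ℝ)),
    (∃ R : ℝ, ∀ x ∈ A, R ≤ x.1) →
    (∀ x ∈ A, ∃ q ∈ Q, |x.1 - s * q.1| ≤ 2 * s ∧ |x.2 - s * q.2| ≤ 2 * s) →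
    (∀ C : Finset (ℤ × ℤ), (C : Set (ℤ × ℤ)) ⊆ Q →
      (C : Set (ℤ × ℤ)).Pairwise (fun p q => |p.2 - q.2| < |p.1 - q.1|) → C.card ≤ M) →
    ∃ a : ℝ × ℝ → ℝ, (∀ x, 0 ≤ a x ∧ a x ≤ M * (10 * s)) ∧
      (∀ x y, a x - a y ≤ max 0 (x.1 - y.1 + |x.2 - y.2|)) ∧
      (∀ (x : ℝ × ℝ) (t : ℝ), 0 ≤ t → (∀ u, 0 ≤ u → u ≤ t → (x.1 + u, x.2) ∈ A) →
        t ≤ a (x.1 + t, x.2) - a x) ∧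
      (∀ x : ℝ × ℝ, (∀ p ∈ A, x.1 ≤ p.1 + |x.2 - p.2|) → a x = 0) := by
  classical
  induction M with
  | zero =>
    intro Q A _ hQ hC
    have hA : A = ∅ := by
      by_contra hne
      obtain ⟨x, hx⟩ := Set.nonempty_iff_ne_empty.2 hne
      obtain ⟨q, hq, _⟩ := hQ x hx
      have := hC {q} (by simpa using hq) (by simp)
      simp at this
    subst hA
    refine ⟨fun _ => 0, by simp, by simp, ?_, by simp⟩
    intro x t ht h
    exact absurd (h 0 le_rfl ht) (by simp)
  | succ M ih =>
    intro Q A hR hQ hC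
    obtain ⟨R, hR⟩ := hR
    by_cases hA : A = ∅
    · subst hA
      refine ⟨fun _ => 0, fun x => ⟨le_rfl, by positivity⟩, by simp, ?_, by simp⟩
      intro x t ht h
      exact absurd (h 0 le_rfl ht) (by simp)
    have hAne : A.Nonempty := Set.nonempty_iff_ne_empty.2 hA
    have : Nonempty A := hAne.to_subtype
    set G : ℝ → ℝ := fun t => ⨅ p : A, (p.1.1 + |t - p.1.2|) with hG
    have hbdd : ∀ t, BddBelow (Set.range fun p : A => (p.1.1 + |t - p.1.2|)) := by
      intro t
      refine ⟨R, ?_⟩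
      rintro _ ⟨p, rfl⟩
      have := hR p.1 p.2
      have := abs_nonneg (t - p.1.2)
      simp only
      linarith
    have hGle : ∀ t, ∀ p ∈ A, G t ≤ p.1 + |t - p.2| := fun t p hp => ciInf_le (hbdd t) ⟨p, hp⟩
    have hleG : ∀ t c, (∀ p ∈ A, c ≤ p.1 + |t - p.2|) → c ≤ G t := fun t c h =>
      le_ciInf fun p => h p.1 p.2
    have hGlip : ∀ t u, G t ≤ G u + |t - u| := by
      intro t u
      have : G t - |t - u| ≤ G u := by
        apply hleG
        intro p hp
        have h1 := hGle t p hp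
        have h2 := abs_sub_le t u p.2
        linarith
      linarith
    set w : ℝ := 10 * s with hw
    have hwpos : 0 < w := by positivity
    set A' : Set (ℝ × ℝ) := {x | x ∈ A ∧ G x.2 + w ≤ x.1} with hA'
    set Q' : Set (ℤ × ℤ) := {q | q ∈ Q ∧ ∃ x ∈ A', |x.1 - s * q.1| ≤ 2 * s ∧ |x.2 - s * q.2| ≤ 2 * s}
      with hQ'
    obtain ⟨a, ha1, ha2, ha3, ha4⟩ := ih Q' A' ⟨R, fun x hx => hR x hx.1⟩ (by
        intro x hx
        obtain ⟨q, hq, h⟩ := hQ x hx.1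
        exact ⟨q, ⟨hq, x, hx, h⟩, h⟩) (by
        intro C hCQ hCp
        rcases C.eq_empty_or_nonempty with rfl | hCne
        · simp
        obtain ⟨q, hqC, hqmin⟩ := C.exists_min_image (fun q => q.1) hCne
        obtain ⟨hqQ, x, hx, hx1, hx2⟩ := hCQ hqC
        -- a point `p` of `A` well to the left of `x`
        obtain ⟨p, hp, hpx⟩ : ∃ p ∈ A, p.1 + |x.2 - p.2| < x.1 - w + s := by
          by_contra hcon
          push Not at hcon
          have := hleG x.2 _ hcon
          have := hx.2
          linarith
        obtain ⟨r, hrQ, hr1, hr2⟩ := hQ p hp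
        have hrq : |q.2 - r.2| < q.1 - r.1 := by
          have : s * |((q.2 : ℝ) - r.2)| < s * (q.1 - r.1) := by
            have e : s * |((q.2 : ℝ) - r.2)| = |s * q.2 - s * r.2| := by
              rw [← mul_sub, abs_mul, abs_of_pos hs]
            rw [e]
            have t1 : |s * q.2 - s * r.2| ≤ |s * q.2 - x.2| + |x.2 - p.2| + |p.2 - s * r.2| := by
              have := abs_sub_le (s * q.2) x.2 (s * r.2)
              have := abs_sub_le x.2 p.2 (s * r.2)
              linarith
            rw [abs_sub_comm (s * (q.2 : ℝ)) x.2] at t1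
            have := abs_le.1 hx1
            have := abs_le.1 hr1
            rw [mul_sub]
            linarith
          have := lt_of_mul_lt_mul_left this hs.le
          exact_mod_cast this
        have hrC : r ∉ C := by
          intro hr
          have := hqmin r hr
          have := abs_nonneg (q.2 - r.2)
          omega
        have hrel : ∀ c ∈ C, |c.2 - r.2| < |c.1 - r.1| := by
          intro c hc
          by_cases hcq : c = q
          · subst hcq
            exact hrq.trans_le (le_abs_self _)
          · have h1 := hCp hc hqC hcq
            have h2 := hqmin c hc
            have h3 := abs_sub_le c.2 q.2 r.2
            simp only at h1
            rw [abs_of_nonneg (by omega : 0 ≤ c.1 - q.1)] at h1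
            have := le_abs_self (c.1 - r.1)
            omega
        have := hC (insert r C) (by
            intro c hc
            rcases Finset.mem_insert.1 (Finset.mem_coe.1 hc) with rfl | hc
            · exact hrQ
            · exact (hCQ hc).1) (by
            rw [Finset.coe_insert]
            refine hCp.insert ?_
            intro c hc _
            refine ⟨?_, hrel c hc⟩
            have := hrel c hc
            simpa only [abs_sub_comm] using this)
        rw [Finset.card_insert_of_notMem hrC] at this
        omega)
    have hzero : ∀ x : ℝ × ℝ, x.1 ≤ G x.2 + w → a x = 0 := by
      intro x hx
      apply ha4
      intro p hp
      have h1 := hp.2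
      have h2 := hGlip x.2 p.2
      linarith
    have hmono : ∀ (x : ℝ × ℝ) (t : ℝ), 0 ≤ t → a x ≤ a (x.1 + t, x.2) := by
      intro x t ht
      have := ha2 x (x.1 + t, x.2)
      simp only [sub_self, abs_zero, add_zero] at this
      rw [max_eq_left (by linarith)] at this
      linarith
    refine ⟨fun x => max 0 (min (x.1 - G x.2) w) + a x, ?_, ?_, ?_, ?_⟩
    · intro x
      have := ha1 x
      constructor
      · have := le_max_left 0 (min (x.1 - G x.2) w)
        simp only; linarith
      · have : max 0 (min (x.1 - G x.2) w) ≤ w := max_le hwpos.le (min_le_right _ _)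
        push_cast
        linarith
    · intro x y
      have hlip := hGlip y.2 x.2
      rw [abs_sub_comm] at hlip
      have hy0 := (ha1 y).1
      simp only
      set d := x.1 - y.1 + |x.2 - y.2| with hd
      by_cases hx : x.1 ≤ G x.2 + w
      · rw [hzero x hx]
        have : max 0 (min (x.1 - G x.2) w) ≤ max 0 (min (y.1 - G y.2) w) + max 0 d := by
          apply max_le
          · positivity
          · rcases le_total (y.1 - G y.2) w with h | h
            · rw [min_eq_left h]
              have := le_max_right 0 d
              have := le_max_right 0 (y.1 - G y.2)
              have := min_le_left (x.1 - G x.2) w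
              linarith
            · rw [min_eq_right h]
              have := le_max_left 0 d
              have := le_max_right 0 w
              have := min_le_right (x.1 - G x.2) w
              linarith
        linarith
      · push Not at hx
        rw [min_eq_right (by linarith : w ≤ x.1 - G x.2), max_eq_right hwpos.le]
        by_cases hy : G y.2 + w ≤ y.1
        · rw [min_eq_right (by linarith : w ≤ y.1 - G y.2), max_eq_right hwpos.le]
          have := ha2 x y
          linarith
        · push Not at hy
          have h1 := ha2 x (G y.2 + w, y.2)
          rw [hzero (G y.2 + w, y.2) le_rfl] at h1
          simp only at h1
          rw [max_eq_right (by linarith)] at h1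
          rw [min_eq_left (by linarith : y.1 - G y.2 ≤ w)]
          have := le_max_right 0 (y.1 - G y.2)
          have := le_max_right 0 d
          linarith
    · intro x t ht h
      have hx0 : G x.2 ≤ x.1 := by
        have := hGle x.2 _ (h 0 le_rfl ht)
        simpa using this
      simp only
      rw [max_eq_right (le_min (by linarith) hwpos.le), max_eq_right (le_min (by linarith) hwpos.le)]
      by_cases c1 : G x.2 + w ≤ x.1
      · rw [min_eq_right (by linarith), min_eq_right (by linarith)]
        have := ha3 x t ht (fun u hu hut => ⟨h u hu hut, by simp only; linarith⟩)
        linarith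
      · push Not at c1
        by_cases c2 : x.1 + t ≤ G x.2 + w
        · rw [min_eq_left (by linarith), min_eq_left (by linarith)]
          have := hmono x t ht
          linarith
        · push Not at c2
          rw [min_eq_right (by linarith), min_eq_left (by linarith), hzero x c1.le]
          have := ha3 (G x.2 + w, x.2) (x.1 + t - (G x.2 + w)) (by linarith) (by
            intro u hu hut
            refine ⟨?_, by simp only; linarith⟩
            have := h (G x.2 + w - x.1 + u) (by linarith) (by linarith)
            convert this using 2
            ring)
          rw [hzero (G x.2 + w, x.2) le_rfl] at this
          simp only [add_sub_cancel] at this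
          linarith
    · intro x hx
      have h1 := hleG _ _ hx
      simp only
      rw [hzero x (by linarith), max_eq_left ((min_le_left _ _).trans (by linarith))]
      simp


/-! ### Planar null sets -/

lemma card_cells_le {U : Set (ℝ × ℝ)} {s τ : ℝ} (hs : 0 < s) (hτ : 0 ≤ τ)
    (hU : volume U ≤ ENNReal.ofReal τ) (F : Finset (ℤ × ℤ))
    (hF : ∀ q ∈ F, Set.Ico (s * q.1) (s * (q.1 + 1)) ×ˢ Set.Ico (s * q.2) (s * (q.2 + 1)) ⊆ U) :
    F.card * s ^ 2 ≤ τ := by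
  set c : ℤ × ℤ → Set (ℝ × ℝ) := fun q =>
    Set.Ico (s * q.1) (s * (q.1 + 1)) ×ˢ Set.Ico (s * q.2) (s * (q.2 + 1)) with hc
  have hvol : ∀ q, volume (c q) = ENNReal.ofReal (s ^ 2) := by
    intro q
    rw [hc, Measure.volume_eq_prod, Measure.prod_prod, Real.volume_Ico, Real.volume_Ico,
      ← ENNReal.ofReal_mul (by nlinarith)]
    congr 1
    ring
  have huniq : ∀ (z z' : ℤ) (x : ℝ), x ∈ Set.Ico (s * z) (s * (z + 1)) →
      x ∈ Set.Ico (s * z') (s * (z' + 1)) → z = z' := by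
    intro z z' x h h'
    have h1 : (z : ℝ) < z' + 1 := lt_of_mul_lt_mul_left (h.1.trans_lt h'.2) hs.le
    have h2 : (z' : ℝ) < z + 1 := lt_of_mul_lt_mul_left (h'.1.trans_lt h.2) hs.le
    norm_cast at h1 h2
    omega
  have hdisj : (F : Set (ℤ × ℤ)).PairwiseDisjoint c := by
    intro p _ q _ hpq
    refine Set.disjoint_left.2 fun x hx hx' => hpq ?_
    exact Prod.ext (huniq _ _ _ hx.1 hx'.1) (huniq _ _ _ hx.2 hx'.2)
  have hmeas : ∀ q ∈ F, MeasurableSet (c q) := fun q _ => measurableSet_Ico.prod measurableSet_Ico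
  have h1 : volume (⋃ q ∈ F, c q) = F.card * ENNReal.ofReal (s ^ 2) := by
    rw [measure_biUnion_finset hdisj hmeas]
    simp [hvol]
  have h2 : volume (⋃ q ∈ F, c q) ≤ ENNReal.ofReal τ :=
    (measure_mono (Set.iUnion₂_subset hF)).trans hU
  rw [h1, ← ENNReal.ofReal_natCast, ← ENNReal.ofReal_mul (by positivity),
    ENNReal.ofReal_le_ofReal_iff hτ] at h2
  exact h2

/-- Lipschitz version of `exists_planar`: near every point of the null set `K`, at scale `s`, either
`a` has slope one in the first variable or `b` has slope one in the second variable. -/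
lemma exists_planar_rough {K : Set (ℝ × ℝ)} (hK : IsCompact K) (hK0 : volume K = 0)
    {ε : ℝ} (hε : 0 < ε) :
    ∃ s > 0, ∃ a b : ℝ × ℝ → ℝ, (∀ x, 0 ≤ a x ∧ a x ≤ ε) ∧ (∀ x, 0 ≤ b x ∧ b x ≤ ε) ∧
      (∀ x y, a x - a y ≤ max 0 (x.1 - y.1 + |x.2 - y.2|)) ∧
      (∀ x y, b x - b y ≤ max 0 (x.2 - y.2 + |x.1 - y.1|)) ∧
      ∀ x ∈ K, (∀ (y : ℝ × ℝ) (t : ℝ), 0 ≤ t → y ∈ Metric.ball x s → y + (t, 0) ∈ Metric.ball x s →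
          t ≤ a (y + (t, 0)) - a y) ∨
        (∀ (y : ℝ × ℝ) (t : ℝ), 0 ≤ t → y ∈ Metric.ball x s → y + (0, t) ∈ Metric.ball x s →
          t ≤ b (y + (0, t)) - b y) := by
  classical
  -- the `s`-cells meeting `K` are at most `(θ / s)²` in number
  set θ : ℝ := ε / 20 with hθ
  have hθpos : 0 < θ := by positivity
  obtain ⟨U, hKU, hUo, hU⟩ := Set.exists_isOpen_lt_of_lt K (ENNReal.ofReal (θ ^ 2))
    (by rw [hK0]; exact ENNReal.ofReal_pos.2 (by positivity))
  obtain ⟨r, hr, hrU⟩ := hK.exists_thickening_subset_open hUo hKU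
  set s : ℝ := min r θ with hs'
  have hs : 0 < s := lt_min hr hθpos
  have hsr : s ≤ r := min_le_left _ _
  have hsθ : s ≤ θ := min_le_right _ _
  set c : ℝ × ℝ → ℤ × ℤ := fun x => (⌊x.1 / s⌋, ⌊x.2 / s⌋) with hc
  have hfl : ∀ y : ℝ, s * ⌊y / s⌋ ≤ y ∧ y < s * (⌊y / s⌋ + 1) := by
    intro y
    have h1 := Int.floor_le (y / s)
    have h2 := Int.lt_floor_add_one (y / s)
    rw [le_div_iff₀ hs] at h1
    rw [div_lt_iff₀ hs] at h2
    constructor <;> linarith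
  have hcard : ∀ F : Finset (ℤ × ℤ), (F : Set (ℤ × ℤ)) ⊆ c '' K → F.card * s ^ 2 ≤ θ ^ 2 := by
    intro F hF
    refine card_cells_le hs (by positivity) hU.le F ?_
    intro q hq y hy
    obtain ⟨x, hx, rfl⟩ := hF hq
    apply hrU
    rw [Metric.mem_thickening_iff]
    refine ⟨x, hx, lt_of_lt_of_le ?_ hsr⟩
    have h1 := hfl x.1
    have h2 := hfl x.2
    have h3 := hy.1
    have h4 := hy.2
    simp only [hc, Set.mem_Ico] at h3 h4
    rw [Prod.dist_eq, max_lt_iff, Real.dist_eq, Real.dist_eq, abs_lt, abs_lt]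
    refine ⟨⟨?_, ?_⟩, ?_, ?_⟩ <;> linarith
  have hfin : (c '' K).Finite := by
    by_contra hinf
    obtain ⟨N, hN⟩ := exists_nat_gt (θ ^ 2 / s ^ 2)
    obtain ⟨F, hF, hFc⟩ := Set.Infinite.exists_subset_card_eq hinf N
    have := hcard F hF
    rw [hFc] at this
    rw [div_lt_iff₀ (by positivity)] at hN
    linarith
  set P := hfin.toFinset with hP
  set M : ℕ := ⌈θ / s⌉₊ with hM
  have hM1 : θ / s ≤ M := Nat.le_ceil _
  have hM2 : (M : ℝ) < θ / s + 1 := Nat.ceil_lt_add_one (by positivity)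
  have hMs : M * (10 * s) ≤ ε := by
    have : (M : ℝ) * s ≤ θ + s := by
      have := mul_le_mul_of_nonneg_right hM2.le hs.le
      rw [add_mul, div_mul_cancel₀ _ hs.ne'] at this
      linarith
    linarith
  have hPM : P.card ≤ M * M := by
    have h1 := hcard P (by simp [hP])
    have h2 : θ ≤ M * s := by rwa [div_le_iff₀ hs] at hM1
    have h3 : (P.card : ℝ) * s ^ 2 ≤ (M * M) * s ^ 2 := by nlinarith
    have := le_of_mul_le_mul_right h3 (by positivity)
    exact_mod_cast this
  obtain ⟨P₁, hP₁, hH, t, ht, hV⟩ := exists_chain_split M P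
  have htM : t ≤ M := by
    have := Finset.card_le_card hP₁
    by_contra hlt
    push Not at hlt
    nlinarith
  obtain ⟨R, hR⟩ : ∃ R : ℝ, ∀ x ∈ K, R ≤ x.1 ∧ R ≤ x.2 := by
    obtain ⟨B, hB⟩ := hK.isBounded.exists_norm_le
    refine ⟨-B, fun x hx => ?_⟩
    have := hB x hx
    have h1 := (norm_fst_le x).trans this
    have h2 := (norm_snd_le x).trans this
    rw [Real.norm_eq_abs, abs_le] at h1 h2
    exact ⟨h1.1, h2.1⟩
  obtain ⟨a, ha1, ha2, ha3, -⟩ := exists_height s hs M (P \ P₁ : Finset (ℤ × ℤ))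
    {x | ∃ x' ∈ K, dist x x' < s ∧ c x' ∈ P \ P₁}
    ⟨R - s, by
      rintro x ⟨x', hx', hd, -⟩
      rw [Prod.dist_eq, max_lt_iff, Real.dist_eq, Real.dist_eq, abs_lt, abs_lt] at hd
      have := (hR x' hx').1
      linarith⟩ (by
      rintro x ⟨x', hx', hd, hc'⟩
      refine ⟨c x', hc', ?_⟩
      rw [Prod.dist_eq, max_lt_iff, Real.dist_eq, Real.dist_eq, abs_lt, abs_lt] at hd
      have h1 := hfl x'.1
      have h2 := hfl x'.2
      simp only [hc, abs_le]
      refine ⟨⟨?_, ?_⟩, ?_, ?_⟩ <;> linarith) (fun C hC => hH C (by exact_mod_cast hC))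
  obtain ⟨b, hb1, hb2, hb3, -⟩ := exists_height s hs M
    (Prod.swap '' (P₁ : Set (ℤ × ℤ)))
    {x | ∃ x' ∈ K, dist x.swap x' < s ∧ c x' ∈ P₁}
    ⟨R - s, by
      rintro x ⟨x', hx', hd, -⟩
      rw [Prod.dist_eq, max_lt_iff, Real.dist_eq, Real.dist_eq, abs_lt, abs_lt] at hd
      have := (hR x' hx').2
      simp only [Prod.fst_swap, Prod.snd_swap] at hd
      linarith⟩ (by
      rintro x ⟨x', hx', hd, hc'⟩
      refine ⟨(c x').swap, ⟨_, hc', rfl⟩, ?_⟩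
      rw [Prod.dist_eq, max_lt_iff, Real.dist_eq, Real.dist_eq, abs_lt, abs_lt] at hd
      have h1 := hfl x'.1
      have h2 := hfl x'.2
      simp only [hc, abs_le, Prod.fst_swap, Prod.snd_swap] at hd ⊢
      refine ⟨⟨?_, ?_⟩, ?_, ?_⟩ <;> linarith) (by
      intro C hC hCp
      refine le_trans ?_ htM
      rw [← Finset.card_image_of_injective C Prod.swap_injective]
      refine hV _ ?_ ?_
      · intro q hq
        obtain ⟨p, hp, rfl⟩ := Finset.mem_image.1 hq
        obtain ⟨q', hq', rfl⟩ := hC hp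
        simpa using hq'
      · rw [Finset.coe_image]
        rintro _ ⟨p, hp, rfl⟩ _ ⟨q, hq, rfl⟩ hne
        exact hCp hp hq (fun h => hne (by rw [h])))
  refine ⟨s, hs, a, fun x => b x.swap, fun x => ⟨(ha1 x).1, (ha1 x).2.trans hMs⟩,
    fun x => ⟨(hb1 _).1, (hb1 _).2.trans hMs⟩, ha2, fun x y => hb2 _ _, ?_⟩
  intro x hx
  have hxP : c x ∈ P := by simpa [hP] using ⟨x.1, x.2, hx, rfl⟩
  by_cases hx1 : c x ∈ P₁
  · right
    intro y t ht hy hyt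
    have := hb3 y.swap t ht (by
      intro u hu hut
      refine ⟨x, hx, ?_, hx1⟩
      rw [Metric.mem_ball, Prod.dist_eq, max_lt_iff, Real.dist_eq, Real.dist_eq, abs_lt, abs_lt]
        at hy hyt
      rw [Prod.dist_eq, max_lt_iff, Real.dist_eq, Real.dist_eq, abs_lt, abs_lt]
      simp only [Prod.fst_swap, Prod.snd_swap, Prod.fst_add, Prod.snd_add] at hy hyt ⊢
      refine ⟨⟨?_, ?_⟩, ?_, ?_⟩ <;> linarith)
    convert this using 3
    ext <;> simp
  · left
    intro y t ht hy hyt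
    have := ha3 y t ht (by
      intro u hu hut
      refine ⟨x, hx, ?_, Finset.mem_sdiff.2 ⟨hxP, hx1⟩⟩
      rw [Metric.mem_ball, Prod.dist_eq, max_lt_iff, Real.dist_eq, Real.dist_eq, abs_lt, abs_lt]
        at hy hyt
      rw [Prod.dist_eq, max_lt_iff, Real.dist_eq, Real.dist_eq, abs_lt, abs_lt]
      simp only [Prod.fst_add, Prod.snd_add] at hy hyt ⊢
      refine ⟨⟨?_, ?_⟩, ?_, ?_⟩ <;> linarith)
    convert this using 3
    ext <;> simp


/-- Mollification at scale `r`, recorded through the inequalities on values and on increments that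
it preserves. -/
lemma exists_mollify {a : ℝ × ℝ → ℝ} (ha : Continuous a) {r : ℝ} (hr : 0 < r) :
    ∃ g : ℝ × ℝ → ℝ, ContDiff ℝ ∞ g ∧
      (∀ x c, (∀ y, a y ≤ c) → g x ≤ c) ∧ (∀ x c, (∀ y, c ≤ a y) → c ≤ g x) ∧
      (∀ x v c, (∀ y ∈ Metric.ball x r, a (y + v) - a y ≤ c) → g (x + v) - g x ≤ c) ∧
      (∀ x v c, (∀ y ∈ Metric.ball x r, c ≤ a (y + v) - a y) → c ≤ g (x + v) - g x) := by
  let φ : ContDiffBump (0 : ℝ × ℝ) := ⟨r / 2, r, by linarith, by linarith⟩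
  set η := φ.normed volume with hη
  have hηc : Continuous η := φ.continuous_normed
  have hηs : HasCompactSupport η := φ.hasCompactSupport_normed
  have hη0 : ∀ y, 0 ≤ η y := fun y => φ.nonneg_normed y
  have hη1 : ∫ y, η y = 1 := φ.integral_normed
  have hηint : Integrable η := hηc.integrable_of_hasCompactSupport hηs
  have hint : ∀ b : ℝ × ℝ → ℝ, Continuous b → Integrable fun y => η y * b y := fun b hb =>
    (hηc.mul hb).integrable_of_hasCompactSupport hηs.mul_right
  have hηsupp : ∀ y, r ≤ ‖y‖ → η y = 0 := by
    intro y hy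
    have : y ∉ Function.support η := by
      rw [hη, φ.support_normed_eq]
      simpa using hy
    simpa using this
  -- averages against `η` preserve inequalities valid on the ball
  have key : ∀ (b : ℝ × ℝ → ℝ) (c : ℝ), Continuous b → (∀ y, ‖y‖ < r → b y ≤ c) →
      ∫ y, η y * b y ≤ c := by
    intro b c hb h
    calc ∫ y, η y * b y ≤ ∫ y, η y * c := by
          refine integral_mono (hint b hb) (hηint.mul_const c) fun y => ?_
          by_cases hy : ‖y‖ < r
          · exact mul_le_mul_of_nonneg_left (h y hy) (hη0 y)
          · simp [hηsupp y (not_lt.1 hy)]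
      _ = c := by rw [integral_mul_const, hη1, one_mul]
  have key' : ∀ (b : ℝ × ℝ → ℝ) (c : ℝ), Continuous b → (∀ y, ‖y‖ < r → c ≤ b y) →
      c ≤ ∫ y, η y * b y := by
    intro b c hb h
    have := key (fun y => - b y) (-c) hb.neg (fun y hy => neg_le_neg (h y hy))
    simp only [mul_neg, integral_neg] at this
    linarith
  have hdiff : ∀ x v, (∫ y, η y * a (x + v - y)) - (∫ y, η y * a (x - y)) =
      ∫ y, η y * (a ((x - y) + v) - a (x - y)) := by
    intro x v
    rw [← integral_sub (hint _ (by fun_prop)) (hint _ (by fun_prop))]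
    congr 1
    ext y
    rw [show x + v - y = x - y + v by abel]
    ring
  refine ⟨fun x => ∫ y, η y * a (x - y), ?_, ?_, ?_, ?_, ?_⟩
  · have h := hηs.contDiff_convolution_left (ContinuousLinearMap.lsmul ℝ ℝ)
      (μ := volume) (n := ⊤) (f := η) (g := a)
      (φ.contDiff_normed) ha.locallyIntegrable
    exact h
  · intro x c h
    exact key _ c (by fun_prop) fun y _ => h _
  · intro x c h
    exact key' _ c (by fun_prop) fun y _ => h _
  · intro x v c h
    simp only
    rw [hdiff]
    exact key _ c (by fun_prop) fun y hy => h _ (by simpa using hy)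
  · intro x v c h
    simp only
    rw [hdiff]
    exact key' _ c (by fun_prop) fun y hy => h _ (by simpa using hy)

lemma fderiv_apply_le_of_eventually {E : Type*} [NormedAddCommGroup E] [NormedSpace ℝ E]
    {g : E → ℝ} {x v : E} {c : ℝ}
    (hg : DifferentiableAt ℝ g x)
    (h : ∀ᶠ t : ℝ in 𝓝[>] 0, g (x + t • v) - g x ≤ c * t) : fderiv ℝ g x v ≤ c := by
  have h1 := (hg.hasFDerivAt.hasLineDerivAt v).tendsto_slope_zero_right
  refine le_of_tendsto h1 ?_
  filter_upwards [h, self_mem_nhdsWithin] with t ht ht0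
  rw [smul_eq_mul, inv_mul_le_iff₀ ht0]
  linarith

lemma le_fderiv_apply_of_eventually {E : Type*} [NormedAddCommGroup E] [NormedSpace ℝ E]
    {g : E → ℝ} {x v : E} {c : ℝ}
    (hg : DifferentiableAt ℝ g x)
    (h : ∀ᶠ t : ℝ in 𝓝[>] 0, c * t ≤ g (x + t • v) - g x) : c ≤ fderiv ℝ g x v := by
  have h1 := (hg.hasFDerivAt.hasLineDerivAt v).tendsto_slope_zero_right
  refine ge_of_tendsto h1 ?_
  filter_upwards [h, self_mem_nhdsWithin] with t ht ht0
  rw [smul_eq_mul, le_inv_mul_iff₀ ht0]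
  linarith

/-- A compact null set in the plane carries smooth functions of arbitrarily small sup norm whose
divergence is at least one on the set, with controlled partial derivatives everywhere. -/
lemma exists_planar {K : Set (ℝ × ℝ)} (hK : IsCompact K) (hK0 : volume K = 0)
    {ε : ℝ} (hε : 0 < ε) :
    ∃ a b : ℝ × ℝ → ℝ, ContDiff ℝ ∞ a ∧ ContDiff ℝ ∞ b ∧
      (∀ x, 0 ≤ a x ∧ a x ≤ ε) ∧ (∀ x, 0 ≤ b x ∧ b x ≤ ε) ∧
      (∀ x, 0 ≤ fderiv ℝ a x (1, 0) ∧ fderiv ℝ a x (1, 0) ≤ 1 ∧ |fderiv ℝ a x (0, 1)| ≤ 1) ∧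
      (∀ x, 0 ≤ fderiv ℝ b x (0, 1) ∧ fderiv ℝ b x (0, 1) ≤ 1 ∧ |fderiv ℝ b x (1, 0)| ≤ 1) ∧
      ∀ x ∈ K, 1 ≤ fderiv ℝ a x (1, 0) + fderiv ℝ b x (0, 1) := by
  obtain ⟨s, hs, a, b, ha, hb, hal, hbl, hgrow⟩ := exists_planar_rough hK hK0 hε
  have cont : ∀ f : ℝ × ℝ → ℝ, (∀ x y, f x - f y ≤ |x.1 - y.1| + |x.2 - y.2|) →
      Continuous f := by
    intro f hf
    refine (LipschitzWith.of_le_add_mul (2 : NNReal) (f := f) fun x y => ?_).continuous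
    have h1 := hf x y
    have h2 : |x.1 - y.1| ≤ dist x y := by rw [Prod.dist_eq, Real.dist_eq]; exact le_max_left _ _
    have h3 : |x.2 - y.2| ≤ dist x y := by
      rw [Prod.dist_eq, Real.dist_eq (x.2)]; exact le_max_right _ _
    push_cast
    linarith
  have hac : Continuous a := cont a fun x y => (hal x y).trans
    (max_le (by positivity) (by gcongr; exact le_abs_self _))
  have hbc : Continuous b := cont b fun x y => (hbl x y).trans
    (max_le (by positivity) (by rw [add_comm]; gcongr; exact le_abs_self _))
  obtain ⟨A, hA, hA1, hA2, hA3, hA4⟩ := exists_mollify hac (half_pos hs)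
  obtain ⟨B, hB, hB1, hB2, hB3, hB4⟩ := exists_mollify hbc (half_pos hs)
  have hAd : Differentiable ℝ A := hA.differentiable (by simp)
  have hBd : Differentiable ℝ B := hB.differentiable (by simp)
  have pos : ∀ᶠ t : ℝ in 𝓝[>] 0, 0 < t := self_mem_nhdsWithin
  have small : ∀ᶠ t : ℝ in 𝓝[>] 0, t < s / 2 :=
    mem_nhdsWithin_of_mem_nhds (Iio_mem_nhds (half_pos hs))
  have hA0 : ∀ x, 0 ≤ fderiv ℝ A x (1, 0) := fun x => by
    refine le_fderiv_apply_of_eventually hAd.differentiableAt ?_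
    filter_upwards [pos] with t ht
    refine hA4 _ _ _ fun y _ => ?_
    have := hal y (y + t • ((1 : ℝ), (0 : ℝ)))
    simp [ht.le] at this
    simp; linarith
  have hB0 : ∀ x, 0 ≤ fderiv ℝ B x (0, 1) := fun x => by
    refine le_fderiv_apply_of_eventually hBd.differentiableAt ?_
    filter_upwards [pos] with t ht
    refine hB4 _ _ _ fun y _ => ?_
    have := hbl y (y + t • ((0 : ℝ), (1 : ℝ)))
    simp [ht.le] at this
    simp; linarith
  refine ⟨A, B, hA, hB, fun x => ⟨hA2 x 0 fun y => (ha y).1, hA1 x ε fun y => (ha y).2⟩,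
    fun x => ⟨hB2 x 0 fun y => (hb y).1, hB1 x ε fun y => (hb y).2⟩, ?_, ?_, ?_⟩
  · refine fun x => ⟨hA0 x, ?_, abs_le.2 ⟨?_, ?_⟩⟩
    · refine fderiv_apply_le_of_eventually hAd.differentiableAt ?_
      filter_upwards [pos] with t ht
      refine hA3 _ _ _ fun y _ => ?_
      have := hal (y + t • ((1 : ℝ), (0 : ℝ))) y
      simp [ht.le] at this
      simp; linarith
    · refine le_fderiv_apply_of_eventually hAd.differentiableAt ?_
      filter_upwards [pos] with t ht
      refine hA4 _ _ _ fun y _ => ?_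
      have := hal y (y + t • ((0 : ℝ), (1 : ℝ)))
      simp [abs_of_pos ht, ht.le] at this
      simp; linarith
    · refine fderiv_apply_le_of_eventually hAd.differentiableAt ?_
      filter_upwards [pos] with t ht
      refine hA3 _ _ _ fun y _ => ?_
      have := hal (y + t • ((0 : ℝ), (1 : ℝ))) y
      simp [abs_of_pos ht, ht.le] at this
      simp; linarith
  · refine fun x => ⟨hB0 x, ?_, abs_le.2 ⟨?_, ?_⟩⟩
    · refine fderiv_apply_le_of_eventually hBd.differentiableAt ?_
      filter_upwards [pos] with t ht
      refine hB3 _ _ _ fun y _ => ?_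
      have := hbl (y + t • ((0 : ℝ), (1 : ℝ))) y
      simp [ht.le] at this
      simp; linarith
    · refine le_fderiv_apply_of_eventually hBd.differentiableAt ?_
      filter_upwards [pos] with t ht
      refine hB4 _ _ _ fun y _ => ?_
      have := hbl y (y + t • ((1 : ℝ), (0 : ℝ)))
      simp [abs_of_pos ht, ht.le] at this
      simp; linarith
    · refine fderiv_apply_le_of_eventually hBd.differentiableAt ?_
      filter_upwards [pos] with t ht
      refine hB3 _ _ _ fun y _ => ?_
      have := hbl (y + t • ((1 : ℝ), (0 : ℝ))) y
      simp [abs_of_pos ht, ht.le] at this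
      simp; linarith
  · intro x hx
    have mem : ∀ t : ℝ, 0 < t → t < s / 2 → ∀ y ∈ Metric.ball x (s / 2),
        ∀ v : ℝ × ℝ, ‖v‖ ≤ t → y + v ∈ Metric.ball x s := by
      intro t _ ht y hy v hv
      rw [Metric.mem_ball, dist_eq_norm] at hy ⊢
      have := norm_add_le (y - x) v
      rw [show y + v - x = y - x + v by abel]
      linarith
    have sub : Metric.ball x (s / 2) ⊆ Metric.ball x s := Metric.ball_subset_ball (by linarith)
    rcases hgrow x hx with h | h
    · have : 1 ≤ fderiv ℝ A x (1, 0) := by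
        refine le_fderiv_apply_of_eventually hAd.differentiableAt ?_
        filter_upwards [pos, small] with t ht hts
        refine hA4 _ _ _ fun y hy => ?_
        have e : t • ((1 : ℝ), (0 : ℝ)) = (t, 0) := by simp
        rw [e, one_mul]
        exact h y t ht.le (sub hy) (mem t ht hts y hy _ (by simp [Prod.norm_def, abs_of_pos ht, ht.le]))
      linarith [hB0 x]
    · have : 1 ≤ fderiv ℝ B x (0, 1) := by
        refine le_fderiv_apply_of_eventually hBd.differentiableAt ?_
        filter_upwards [pos, small] with t ht hts
        refine hB4 _ _ _ fun y hy => ?_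
        have e : t • ((0 : ℝ), (1 : ℝ)) = (0, t) := by simp
        rw [e, one_mul]
        exact h y t ht.le (sub hy) (mem t ht hts y hy _ (by simp [Prod.norm_def, abs_of_pos ht, ht.le]))
      linarith [hA0 x]


/-! ### Test functions for compact sets with null planar slices -/

section Param

variable {Z : Type*} [NormedAddCommGroup Z] [NormedSpace ℝ Z] [FiniteDimensional ℝ Z]

/-- Version of `exists_planar` with parameters: the planar functions for the slice over `z` still
work over a neighbourhood of `z`, with `1/2` in place of `1`, and are glued by a partition of unity
in the parameter. -/
lemma exists_param {K : Set (Z × (ℝ × ℝ))} (hK : IsCompact K)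
    (hK0 : ∀ z, volume {v : ℝ × ℝ | (z, v) ∈ K} = 0) {ε : ℝ} (hε : 0 < ε) :
    ∃ a b : Z × (ℝ × ℝ) → ℝ, ContDiff ℝ ∞ a ∧ ContDiff ℝ ∞ b ∧
      (∀ x, |a x| ≤ ε) ∧ (∀ x, |b x| ≤ ε) ∧
      (∀ x, 0 ≤ fderiv ℝ a x (0, 1, 0) ∧ fderiv ℝ a x (0, 1, 0) ≤ 1 ∧
        |fderiv ℝ a x (0, 0, 1)| ≤ 1) ∧
      (∀ x, 0 ≤ fderiv ℝ b x (0, 0, 1) ∧ fderiv ℝ b x (0, 0, 1) ≤ 1 ∧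
        |fderiv ℝ b x (0, 1, 0)| ≤ 1) ∧
      ∀ x ∈ K, 1 / 2 ≤ fderiv ℝ a x (0, 1, 0) + fderiv ℝ b x (0, 0, 1) := by
  classical
  have hslice : ∀ z, IsCompact {v : ℝ × ℝ | (z, v) ∈ K} := fun z =>
    (Topology.IsClosedEmbedding.of_continuous_injective_isClosedMap (by fun_prop)
      (Prod.mk_right_injective z) (isClosedMap_prodMk_left z)).isCompact_preimage hK
  choose α β hα hβ hα0 hβ0 hα1 hβ1 hαβ using fun z => exists_planar (hslice z) (hK0 z) hε
  set W : Z → Set (ℝ × ℝ) := fun z =>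
    {v | 1 / 2 < fderiv ℝ (α z) v (1, 0) + fderiv ℝ (β z) v (0, 1)} with hW
  have hWo : ∀ z, IsOpen (W z) := by
    intro z
    have h1 : Continuous fun v => fderiv ℝ (α z) v (1, 0) :=
      ((hα z).continuous_fderiv (by simp)).clm_apply continuous_const
    have h2 : Continuous fun v => fderiv ℝ (β z) v (0, 1) :=
      ((hβ z).continuous_fderiv (by simp)).clm_apply continuous_const
    exact isOpen_lt continuous_const (h1.add h2)
  -- `O z` is the set of parameters over which the slice of `K` is contained in `W z`
  set O : Z → Set Z := fun z => (Prod.fst '' (K ∩ Prod.snd ⁻¹' (W z)ᶜ))ᶜ with hO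
  have hOo : ∀ z, IsOpen (O z) := by
    intro z
    refine IsClosed.isOpen_compl (self := ((hK.inter_right ?_).image continuous_fst).isClosed)
    exact (hWo z).isClosed_compl.preimage continuous_snd
  have hOK : ∀ z y, y ∈ K → y.1 ∈ O z → y.2 ∈ W z := by
    intro z y hy hyO
    by_contra h
    exact hyO ⟨y, ⟨hy, h⟩, rfl⟩
  have hzO : ∀ z, z ∈ O z := by
    rintro z ⟨⟨z', v⟩, ⟨h1, h2⟩, rfl⟩
    refine h2 ?_
    have := hαβ z' v h1
    simp only [hW, Set.mem_ofPred_eq]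
    linarith
  have hπ : IsCompact (Prod.fst '' K) := hK.image continuous_fst
  obtain ⟨t, ht⟩ := hπ.elim_finite_subcover O hOo (fun z _ => Set.mem_iUnion.2 ⟨z, hzO z⟩)
  obtain ⟨h, hh⟩ := SmoothPartitionOfUnity.exists_isSubordinate (ι := t) 𝓘(ℝ, Z) hπ.isClosed
    (fun i => O i) (fun i => hOo i) (by
      intro z hz
      obtain ⟨i, hi, hzi⟩ := Set.mem_iUnion₂.1 (ht hz)
      exact Set.mem_iUnion.2 ⟨⟨i, hi⟩, hzi⟩)
  have hhs : ∀ i, ContDiff ℝ ∞ (h i) := fun i => (h i).contMDiff.contDiff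
  have hh0 : ∀ i z, 0 ≤ h i z := fun i z => h.nonneg i z
  have hh1 : ∀ z, ∑ i, h i z ≤ 1 := fun z => by
    have := h.sum_le_one z
    rwa [finsum_eq_sum_of_fintype] at this
  have hh2 : ∀ z ∈ Prod.fst '' K, ∑ i, h i z = 1 := fun z hz => by
    have := h.sum_eq_one hz
    rwa [finsum_eq_sum_of_fintype] at this
  have hhO : ∀ i z, h i z ≠ 0 → z ∈ O i := fun i z hz => hh i (subset_tsupport _ hz)
  have hsm : ∀ γ : Z → ℝ × ℝ → ℝ, (∀ z, ContDiff ℝ ∞ (γ z)) →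
      ContDiff ℝ ∞ (fun y : Z × (ℝ × ℝ) => ∑ i : t, h i y.1 * γ i y.2) := by
    intro γ hγ
    refine ContDiff.sum fun i _ => ?_
    exact ((hhs i).comp contDiff_fst).mul ((hγ i).comp contDiff_snd)
  have hder : ∀ γ : Z → ℝ × ℝ → ℝ, (∀ z, ContDiff ℝ ∞ (γ z)) → ∀ (y : Z × (ℝ × ℝ)) (w : ℝ × ℝ),
      fderiv ℝ (fun y : Z × (ℝ × ℝ) => ∑ i : t, h i y.1 * γ i y.2) y (0, w) =
        ∑ i : t, h i y.1 * fderiv ℝ (γ i) y.2 w := by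
    intro γ hγ y w
    have hd : ∀ i : t, HasFDerivAt (fun y : Z × (ℝ × ℝ) => h i y.1 * γ i y.2)
        (h i y.1 • (fderiv ℝ (γ i) y.2).comp (ContinuousLinearMap.snd ℝ Z (ℝ × ℝ)) +
          γ i y.2 • (fderiv ℝ (h i) y.1).comp (ContinuousLinearMap.fst ℝ Z (ℝ × ℝ))) y := by
      intro i
      have d1 : HasFDerivAt (fun y : Z × (ℝ × ℝ) => h i y.1)
          ((fderiv ℝ (h i) y.1).comp (ContinuousLinearMap.fst ℝ Z (ℝ × ℝ))) y :=
        (((hhs i).differentiable (by simp)).differentiableAt.hasFDerivAt).comp y hasFDerivAt_fst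
      have d2 : HasFDerivAt (fun y : Z × (ℝ × ℝ) => γ i y.2)
          ((fderiv ℝ (γ i) y.2).comp (ContinuousLinearMap.snd ℝ Z (ℝ × ℝ))) y :=
        (((hγ i).differentiable (by simp)).differentiableAt.hasFDerivAt).comp y hasFDerivAt_snd
      exact d1.mul d2
    rw [(HasFDerivAt.fun_sum fun i _ => hd i).fderiv]
    simp
  -- convex combinations of numbers in `[0, c]`
  have hcomb : ∀ (z : Z) (c : ℝ) (g : t → ℝ), 0 ≤ c → (∀ i, g i ≤ c) → ∑ i, h i z * g i ≤ c := by
    intro z c g hc hg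
    calc ∑ i, h i z * g i ≤ ∑ i, h i z * c :=
          Finset.sum_le_sum fun i _ => mul_le_mul_of_nonneg_left (hg i) (hh0 i z)
      _ = (∑ i, h i z) * c := by rw [Finset.sum_mul]
      _ ≤ 1 * c := mul_le_mul_of_nonneg_right (hh1 z) hc
      _ = c := one_mul c
  have hcomb' : ∀ (z : Z) (c : ℝ) (g : t → ℝ), 0 ≤ c → (∀ i, |g i| ≤ c) →
      |∑ i, h i z * g i| ≤ c := by
    intro z c g hc hg
    refine abs_le.2 ⟨?_, hcomb z c g hc fun i => (abs_le.1 (hg i)).2⟩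
    have := hcomb z c (fun i => - g i) hc fun i => by linarith [(abs_le.1 (hg i)).1]
    simp only [mul_neg, Finset.sum_neg_distrib] at this
    linarith
  have hnn : ∀ (z : Z) (g : t → ℝ), (∀ i, 0 ≤ g i) → 0 ≤ ∑ i, h i z * g i := fun z g hg =>
    Finset.sum_nonneg fun i _ => mul_nonneg (hh0 i z) (hg i)
  refine ⟨fun y => ∑ i : t, h i y.1 * α i y.2, fun y => ∑ i : t, h i y.1 * β i y.2, hsm α hα,
    hsm β hβ, ?_, ?_, ?_, ?_, ?_⟩
  · intro y
    exact hcomb' _ _ _ hε.le fun i => abs_le.2 ⟨by linarith [(hα0 i y.2).1], (hα0 i y.2).2⟩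
  · intro y
    exact hcomb' _ _ _ hε.le fun i => abs_le.2 ⟨by linarith [(hβ0 i y.2).1], (hβ0 i y.2).2⟩
  · intro y
    rw [hder α hα, hder α hα]
    exact ⟨hnn _ _ fun i => (hα1 i y.2).1, hcomb _ _ _ zero_le_one fun i => (hα1 i y.2).2.1,
      hcomb' _ _ _ zero_le_one fun i => (hα1 i y.2).2.2⟩
  · intro y
    rw [hder β hβ, hder β hβ]
    exact ⟨hnn _ _ fun i => (hβ1 i y.2).1, hcomb _ _ _ zero_le_one fun i => (hβ1 i y.2).2.1,
      hcomb' _ _ _ zero_le_one fun i => (hβ1 i y.2).2.2⟩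
  · intro y hy
    rw [hder α hα, hder β hβ, ← Finset.sum_add_distrib]
    calc (1 / 2 : ℝ) = ∑ i, h i y.1 * (1 / 2) := by
          rw [← Finset.sum_mul, hh2 y.1 ⟨y, hy, rfl⟩, one_mul]
      _ ≤ _ := by
          refine Finset.sum_le_sum fun i _ => ?_
          rw [← mul_add]
          by_cases hz : h i y.1 = 0
          · simp [hz]
          · exact mul_le_mul_of_nonneg_left (hOK i y hy (hhO i _ hz)).le (hh0 i _)

end Param

/-! ### The measure of compact sets with null planar slices -/

section Core

variable {X : Type*} [NormedAddCommGroup X] [NormedSpace ℝ X] [FiniteDimensional ℝ X]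

lemma exists_smooth_cutoff {K U : Set X} (hK : IsCompact K) (hU : IsOpen U) (hKU : K ⊆ U) :
    ∃ χ : X → ℝ, ContDiff ℝ ∞ χ ∧ HasCompactSupport χ ∧ (∀ x, 0 ≤ χ x ∧ χ x ≤ 1) ∧
      (∀ x ∈ K, χ x = 1) ∧ ∀ x ∉ U, χ x = 0 := by
  obtain ⟨K', hK', h1, h2⟩ := exists_compact_between hK hU hKU
  obtain ⟨χ, hχ1, hχ0, hχ⟩ := exists_contMDiffMap_one_nhds_of_subset_interior (n := ⊤)
    𝓘(ℝ, X) hK.isClosed h1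
  refine ⟨χ, χ.contMDiff.contDiff, HasCompactSupport.intro hK' hχ0, fun x => hχ x, ?_, ?_⟩
  · intro x hx
    exact hχ1.self_of_nhdsSet x hx
  · intro x hx
    exact hχ0 x fun h => hx (h2 h)

variable [MeasurableSpace X] [BorelSpace X]

/-- If `∂_u (p μ) = ∂_w (q μ)` with `p` close to `1` and `q` close to `0` on `K`, then functions of
small sup norm have a small average of `∂_u a` over `K`: the identity is tested with `χ a`, where
`χ` is a cutoff of `K` supported in a set which has hardly more measure. -/
lemma integral_on_compact_le {μ : Measure X} [IsFiniteMeasure μ] {p q : X → ℝ} {u w : X} {L : ℝ}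
    (hp : Measurable p) (hq : Measurable q)
    (hpL : ∀ᵐ x ∂μ, |p x| ≤ L) (hqL : ∀ᵐ x ∂μ, |q x| ≤ L)
    (hsym : ∀ φ : X → ℝ, ContDiff ℝ ∞ φ → HasCompactSupport φ →
      ∫ x, fderiv ℝ φ x u * p x ∂μ = ∫ x, fderiv ℝ φ x w * q x ∂μ)
    {K : Set X} (hK : IsCompact K) (hpK : ∀ x ∈ K, |p x - 1| ≤ 1 / 100)
    (hqK : ∀ x ∈ K, |q x| ≤ 1 / 100) (hKpos : 0 < μ.real K) :
    ∃ ε > 0, ∀ a : X → ℝ, ContDiff ℝ ∞ a → (∀ x, |a x| ≤ ε) →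
      (∀ x, 0 ≤ fderiv ℝ a x u ∧ fderiv ℝ a x u ≤ 1 ∧ |fderiv ℝ a x w| ≤ 1) →
      ∫ x in K, fderiv ℝ a x u ∂μ ≤ 1 / 10 * μ.real K := by
  set L' : ℝ := max L 1 with hL'
  have hL'1 : 1 ≤ L' := le_max_right _ _
  have hL'0 : 0 < L' := by linarith
  replace hpL : ∀ᵐ x ∂μ, |p x| ≤ L' := hpL.mono fun x h => h.trans (le_max_left _ _)
  replace hqL : ∀ᵐ x ∂μ, |q x| ≤ L' := hqL.mono fun x h => h.trans (le_max_left _ _)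
  set κ : ℝ := μ.real K / (100 * L') with hκ
  have hκpos : 0 < κ := by positivity
  obtain ⟨U, hKU, hUo, -, hUK⟩ := hK.measurableSet.exists_isOpen_sdiff_lt (measure_ne_top μ K)
    (ε := ENNReal.ofReal κ) (by simpa using hκpos)
  have hUK' : μ.real (U \ K) ≤ κ := ENNReal.toReal_le_of_le_ofReal hκpos.le hUK.le
  obtain ⟨χ, hχs, hχc, hχ01, hχ1, hχ0⟩ := exists_smooth_cutoff hK hUo hKU
  have hcu : ∀ (g : X → ℝ) (v : X), ContDiff ℝ ∞ g → Continuous fun x => fderiv ℝ g x v :=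
    fun g v hg => (hg.continuous_fderiv (by simp)).clm_apply continuous_const
  have hcs : ∀ (g : X → ℝ) (v : X), HasCompactSupport g →
      HasCompactSupport fun x => fderiv ℝ g x v := fun g v hg => hg.fderiv_apply (𝕜 := ℝ) v
  obtain ⟨B₁, hB₁⟩ := (hcs χ u hχc).exists_bound_of_continuous (hcu χ u hχs)
  obtain ⟨B₂, hB₂⟩ := (hcs χ w hχc).exists_bound_of_continuous (hcu χ w hχs)
  have hB₁0 : 0 ≤ B₁ := (norm_nonneg _).trans (hB₁ 0)
  have hB₂0 : 0 ≤ B₂ := (norm_nonneg _).trans (hB₂ 0)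
  set D : ℝ := (B₁ + B₂) * L' with hD
  have hD0 : 0 ≤ D := by positivity
  set ε : ℝ := μ.real K / (100 * (D * μ.real Set.univ + 1)) with hε
  have hεpos : 0 < ε := by positivity
  have hεD : ε * D * μ.real Set.univ ≤ μ.real K / 100 := by
    have h0 : 0 ≤ D * μ.real Set.univ := by positivity
    have h1 : ε * (D * μ.real Set.univ + 1) = μ.real K / 100 := by
      rw [hε]; field_simp
    nlinarith
  refine ⟨ε, hεpos, fun a ha haε had => ?_⟩
  have hφs : ContDiff ℝ ∞ (fun x => χ x * a x) := hχs.mul ha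
  have hφc : HasCompactSupport (fun x => χ x * a x) := hχc.mul_right
  have hder : ∀ x v, fderiv ℝ (fun x => χ x * a x) x v =
      χ x * fderiv ℝ a x v + a x * fderiv ℝ χ x v := by
    intro x v
    rw [fderiv_fun_mul (hχs.differentiable (by simp)).differentiableAt
      (ha.differentiable (by simp)).differentiableAt]
    simp
  have hint : ∀ (r : X → ℝ) (v : X), Measurable r → (∀ᵐ x ∂μ, |r x| ≤ L') →
      Integrable (fun x => fderiv ℝ (fun x => χ x * a x) x v * r x) μ := by
    intro r v hr hrL
    obtain ⟨B, hB⟩ := (hcs _ v hφc).exists_bound_of_continuous (hcu _ v hφs)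
    refine Integrable.bdd_mul (c := B) ?_ ?_ ?_
    · exact Integrable.of_bound hr.aestronglyMeasurable L' hrL
    · exact (hcu _ v hφs).aestronglyMeasurable
    · exact Eventually.of_forall hB
  have hintK : Integrable (fun x => K.indicator (fun x => fderiv ℝ a x u - 1 / 50) x) μ := by
    refine Integrable.of_bound (C := 2) ?_ ?_
    · exact (((hcu a u ha).measurable.sub measurable_const).indicator
        hK.measurableSet).aestronglyMeasurable
    · refine Eventually.of_forall fun x => ?_
      by_cases hx : x ∈ K
      · rw [Set.indicator_of_mem hx, Real.norm_eq_abs, abs_le]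
        have := had x
        constructor <;> linarith
      · simp [Set.indicator_of_notMem hx]
  have hintU : Integrable (fun x => (U \ K).indicator (fun _ => 2 * L') x) μ :=
    (integrable_const _).indicator (hUo.measurableSet.diff hK.measurableSet)
  -- lower bound of the integrand on `K`, on `U \ K` and outside `U`
  have hpt : ∀ᵐ x ∂μ, K.indicator (fun x => fderiv ℝ a x u - 1 / 50) x
        - (U \ K).indicator (fun _ => 2 * L') x - ε * D ≤
      fderiv ℝ (fun x => χ x * a x) x u * p x - fderiv ℝ (fun x => χ x * a x) x w * q x := by
    filter_upwards [hpL, hqL] with x hpx hqx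
    rw [hder, hder]
    have e1 : |a x * fderiv ℝ χ x u * p x| ≤ ε * B₁ * L' := by
      rw [abs_mul, abs_mul]
      gcongr
      · exact haε x
      · exact hB₁ x
    have e2 : |a x * fderiv ℝ χ x w * q x| ≤ ε * B₂ * L' := by
      rw [abs_mul, abs_mul]
      gcongr
      · exact haε x
      · exact hB₂ x
    have hεD' : ε * D = ε * B₁ * L' + ε * B₂ * L' := by rw [hD]; ring
    have e1' := (abs_le.1 e1).1
    have e2' := (abs_le.1 e2).2
    obtain ⟨d0, d1, d2⟩ := had x
    by_cases hx : x ∈ K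
    · rw [Set.indicator_of_mem hx, Set.indicator_of_notMem (fun h => h.2 hx), hχ1 x hx]
      have f1 : fderiv ℝ a x u - 1 / 100 ≤ fderiv ℝ a x u * p x := by
        have := (abs_le.1 (hpK x hx)).1
        nlinarith
      have f2 : fderiv ℝ a x w * q x ≤ 1 / 100 := by
        refine (le_abs_self _).trans ?_
        rw [abs_mul]
        calc _ ≤ 1 * (1 / 100 : ℝ) := by gcongr; exact hqK x hx
          _ = _ := by ring
      linarith
    · rw [Set.indicator_of_notMem hx]
      by_cases hxU : x ∈ U
      · have hm : x ∈ U \ K := ⟨hxU, hx⟩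
        rw [Set.indicator_of_mem hm]
        have hχx : |χ x| ≤ 1 := abs_le.2 ⟨by linarith [(hχ01 x).1], (hχ01 x).2⟩
        have f1 : |χ x * fderiv ℝ a x u * p x| ≤ L' := by
          rw [abs_mul, abs_mul]
          calc _ ≤ 1 * 1 * L' := by
                gcongr
                exact abs_le.2 ⟨by linarith, d1⟩
            _ = _ := by ring
        have f2 : |χ x * fderiv ℝ a x w * q x| ≤ L' := by
          rw [abs_mul, abs_mul]
          calc _ ≤ 1 * 1 * L' := by gcongr
            _ = _ := by ring
        have f1' := (abs_le.1 f1).1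
        have f2' := (abs_le.1 f2).2
        linarith
      · rw [Set.indicator_of_notMem (fun h => hxU h.1), hχ0 x hxU]
        linarith
  have hmain := integral_mono_ae ((hintK.sub hintU).sub (integrable_const (ε * D)))
    ((hint p u hp hpL).sub (hint q w hq hqL)) hpt
  have hl : ∫ x, (K.indicator (fun x => fderiv ℝ a x u - 1 / 50) x
        - (U \ K).indicator (fun _ => 2 * L') x - ε * D) ∂μ =
      ∫ x, K.indicator (fun x => fderiv ℝ a x u - 1 / 50) x ∂μ
        - ∫ x, (U \ K).indicator (fun _ => 2 * L') x ∂μ - ∫ _, ε * D ∂μ := by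
    rw [integral_sub, integral_sub hintK hintU]
    exacts [hintK.sub hintU, integrable_const _]
  have hr : ∫ x, (fderiv ℝ (fun x => χ x * a x) x u * p x
      - fderiv ℝ (fun x => χ x * a x) x w * q x) ∂μ = 0 := by
    rw [integral_sub (hint p u hp hpL) (hint q w hq hqL), hsym _ hφs hφc, sub_self]
  replace hmain := (hl.symm.trans_le hmain).trans_eq hr
  rw [integral_indicator hK.measurableSet,
    integral_indicator (hUo.measurableSet.diff hK.measurableSet), integral_sub,
    integral_const, integral_const, integral_const] at hmain
  · simp only [smul_eq_mul, measureReal_restrict_apply MeasurableSet.univ, Set.univ_inter] at hmain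
    have hk : μ.real (U \ K) * (2 * L') ≤ μ.real K / 50 := by
      calc _ ≤ κ * (2 * L') := by gcongr
        _ = _ := by rw [hκ]; field_simp; norm_num
    linarith
  · refine Integrable.of_bound (C := 1) (hcu a u ha).aestronglyMeasurable ?_
    refine Eventually.of_forall fun x => abs_le.2 ?_
    have := had x
    constructor <;> linarith
  · exact integrable_const _

variable {Z : Type*} [NormedAddCommGroup Z] [NormedSpace ℝ Z] [FiniteDimensional ℝ Z]

lemma measure_compact_eq_zero {μ : Measure X} [IsFiniteMeasure μ]
    (e : X ≃L[ℝ] Z × (ℝ × ℝ)) {q₁₁ q₁₂ q₂₁ q₂₂ : X → ℝ} {L : ℝ}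
    (h₁₁ : Measurable q₁₁) (h₁₂ : Measurable q₁₂) (h₂₁ : Measurable q₂₁) (h₂₂ : Measurable q₂₂)
    (b₁₁ : ∀ᵐ x ∂μ, |q₁₁ x| ≤ L) (b₁₂ : ∀ᵐ x ∂μ, |q₁₂ x| ≤ L)
    (b₂₁ : ∀ᵐ x ∂μ, |q₂₁ x| ≤ L) (b₂₂ : ∀ᵐ x ∂μ, |q₂₂ x| ≤ L)
    (hsym₁ : ∀ φ : X → ℝ, ContDiff ℝ ∞ φ → HasCompactSupport φ →
      ∫ x, fderiv ℝ φ x (e.symm (0, 0, 1)) * q₁₁ x ∂μ =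
        ∫ x, fderiv ℝ φ x (e.symm (0, 1, 0)) * q₁₂ x ∂μ)
    (hsym₂ : ∀ φ : X → ℝ, ContDiff ℝ ∞ φ → HasCompactSupport φ →
      ∫ x, fderiv ℝ φ x (e.symm (0, 1, 0)) * q₂₂ x ∂μ =
        ∫ x, fderiv ℝ φ x (e.symm (0, 0, 1)) * q₂₁ x ∂μ)
    {K : Set X} (hK : IsCompact K)
    (hKq : ∀ x ∈ K, |q₁₁ x - 1| ≤ 1 / 100 ∧ |q₁₂ x| ≤ 1 / 100 ∧ |q₂₁ x| ≤ 1 / 100 ∧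
      |q₂₂ x - 1| ≤ 1 / 100)
    (hKn : ∀ z, volume {v : ℝ × ℝ | e.symm (z, v) ∈ K} = 0) : μ K = 0 := by
  by_contra hne
  have hpos : 0 < μ.real K := ENNReal.toReal_pos hne (measure_ne_top _ _)
  obtain ⟨ε₁, hε₁, H₁⟩ := integral_on_compact_le h₂₂ h₂₁ b₂₂ b₂₁ hsym₂ hK
    (fun x hx => (hKq x hx).2.2.2) (fun x hx => (hKq x hx).2.2.1) hpos
  obtain ⟨ε₂, hε₂, H₂⟩ := integral_on_compact_le h₁₁ h₁₂ b₁₁ b₁₂ hsym₁ hK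
    (fun x hx => (hKq x hx).1) (fun x hx => (hKq x hx).2.1) hpos
  obtain ⟨a, b, ha, hb, haε, hbε, had, hbd, hab⟩ := exists_param (hK.image e.continuous)
    (fun z => by
      have : {v : ℝ × ℝ | (z, v) ∈ e '' K} = {v : ℝ × ℝ | e.symm (z, v) ∈ K} := by
        ext v
        constructor
        · rintro ⟨x, hx, h⟩
          change e.symm (z, v) ∈ K
          rw [← h]
          simpa using hx
        · intro h
          exact ⟨_, h, by simp⟩
      rw [this]
      exact hKn z) (lt_min hε₁ hε₂)
  have hder : ∀ (g : Z × (ℝ × ℝ) → ℝ), ContDiff ℝ ∞ g → ∀ x v,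
      fderiv ℝ (fun x => g (e x)) x (e.symm v) = fderiv ℝ g (e x) v := by
    intro g hg x v
    have : HasFDerivAt (fun x => g (e x)) ((fderiv ℝ g (e x)).comp (e : X →L[ℝ] Z × (ℝ × ℝ))) x :=
      ((hg.differentiable (by simp)).differentiableAt.hasFDerivAt).comp x e.hasFDerivAt
    rw [this.fderiv]
    simp
  have I₁ := H₁ (fun x => a (e x)) (ha.comp e.contDiff) (fun x => (haε _).trans (min_le_left _ _))
    (fun x => by rw [hder a ha, hder a ha]; exact had _)
  have I₂ := H₂ (fun x => b (e x)) (hb.comp e.contDiff) (fun x => (hbε _).trans (min_le_right _ _))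
    (fun x => by rw [hder b hb, hder b hb]; exact hbd _)
  simp only [hder a ha] at I₁
  simp only [hder b hb] at I₂
  have hcont : ∀ (g : Z × (ℝ × ℝ) → ℝ) (v : Z × (ℝ × ℝ)), ContDiff ℝ ∞ g →
      Continuous fun x => fderiv ℝ g (e x) v := fun g v hg =>
    ((hg.continuous_fderiv (by simp)).comp e.continuous).clm_apply continuous_const
  have i₁ : IntegrableOn (fun x => fderiv ℝ a (e x) (0, 1, 0)) K μ :=
    (hcont a _ ha).continuousOn.integrableOn_compact hK
  have i₂ : IntegrableOn (fun x => fderiv ℝ b (e x) (0, 0, 1)) K μ :=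
    (hcont b _ hb).continuousOn.integrableOn_compact hK
  have hlow : ∫ x in K, (1 / 2 : ℝ) ∂μ ≤
      ∫ x in K, (fderiv ℝ a (e x) (0, 1, 0) + fderiv ℝ b (e x) (0, 0, 1)) ∂μ := by
    refine setIntegral_mono_on (by simp [integrableOn_const_iff]) (i₁.add i₂) hK.measurableSet ?_
    intro x hx
    exact hab (e x) ⟨x, hx, rfl⟩
  rw [integral_add i₁ i₂, setIntegral_const, smul_eq_mul] at hlow
  linarith

end Core

/-! ### Distributional derivatives -/

lemma integrable_mul_testFunction {X : Type*} [NormedAddCommGroup X] [MeasurableSpace X]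
    [OpensMeasurableSpace X] {m : Measure X} {f : X → ℝ} (hf : Integrable f m) {ψ : X → ℝ} (hψ : Continuous ψ)
    (hψc : HasCompactSupport ψ) : Integrable (fun x => f x * ψ x) m := by
  obtain ⟨C, hC⟩ := hψc.exists_bound_of_continuous hψ
  exact hf.mul_bdd (c := C) hψ.aestronglyMeasurable (Eventually.of_forall hC)

section WeakDerivative

variable {X : Type*} [NormedAddCommGroup X] [NormedSpace ℝ X] [MeasurableSpace X]

/-- The measure `q μ` is the distributional derivative of `f` (a function with respect to the
reference measure `m`) in the direction `v`. -/
def IsWeakDeriv (m μ : Measure X) (f : X → ℝ) (v : X) (q : X → ℝ) : Prop :=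
  ∀ φ : X → ℝ, ContDiff ℝ 1 φ → HasCompactSupport φ →
    ∫ x, f x * fderiv ℝ φ x v ∂m = -∫ x, φ x * q x ∂μ

variable {m μ : Measure X} {f g p q : X → ℝ} {u v w : X}

/-- Symmetry of second distributional derivatives: `∂_w (p μ) = ∂_u (q μ)`. -/
lemma IsWeakDeriv.integral_fderiv_eq (hp : IsWeakDeriv m μ f u p) (hq : IsWeakDeriv m μ f w q)
    {φ : X → ℝ} (hφ : ContDiff ℝ ∞ φ) (hφc : HasCompactSupport φ) :
    ∫ x, fderiv ℝ φ x w * p x ∂μ = ∫ x, fderiv ℝ φ x u * q x ∂μ := by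
  have hs : ∀ a : X, ContDiff ℝ 1 fun x => fderiv ℝ φ x a := fun a =>
    (hφ.fderiv_right (m := 1) (by norm_cast)).clm_apply contDiff_const
  have h1 := hp _ (hs w) (hφc.fderiv_apply (𝕜 := ℝ) w)
  have h2 := hq _ (hs u) (hφc.fderiv_apply (𝕜 := ℝ) u)
  have hd : ∀ a b x, fderiv ℝ (fun x => fderiv ℝ φ x a) x b = fderiv ℝ (fderiv ℝ φ) x b a := by
    intro a b x
    have : DifferentiableAt ℝ (fderiv ℝ φ) x :=
      ((hφ.fderiv_right (m := 1) (by norm_cast)).differentiable (by simp)).differentiableAt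
    rw [fderiv_clm_apply this (differentiableAt_const a)]
    simp
  have hsy : ∀ x, fderiv ℝ (fderiv ℝ φ) x u w = fderiv ℝ (fderiv ℝ φ) x w u := fun x =>
    (hφ.contDiffAt.isSymmSndFDerivAt (by simp only [minSmoothness_of_isRCLikeNormedField]; norm_cast)).eq u w
  simp only [hd] at h1 h2
  simp only [hsy] at h1
  linarith

variable [OpensMeasurableSpace X]

lemma IsWeakDeriv.linearCombination (hf : Integrable f m) (hg : Integrable g m)
    (hp : Integrable p μ) (hq : Integrable q μ)
    (hfp : IsWeakDeriv m μ f v p) (hgq : IsWeakDeriv m μ g v q) (a b : ℝ) :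
    IsWeakDeriv m μ (fun x => a * f x + b * g x) v (fun x => a * p x + b * q x) := by
  intro φ hφ hφc
  have hc : Continuous fun x => fderiv ℝ φ x v :=
    (hφ.continuous_fderiv (by simp)).clm_apply continuous_const
  have hcc := hφc.fderiv_apply (𝕜 := ℝ) v
  have i1 := integrable_mul_testFunction hf hc hcc
  have i2 := integrable_mul_testFunction hg hc hcc
  have i3 := integrable_mul_testFunction hp hφ.continuous hφc
  have i4 := integrable_mul_testFunction hq hφ.continuous hφc
  have e1 : ∫ x, (a * f x + b * g x) * fderiv ℝ φ x v ∂m =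
      a * ∫ x, f x * fderiv ℝ φ x v ∂m + b * ∫ x, g x * fderiv ℝ φ x v ∂m := by
    rw [← integral_const_mul, ← integral_const_mul, ← integral_add (i1.const_mul a)
      (i2.const_mul b)]
    exact integral_congr_ae (Eventually.of_forall fun x => by ring)
  have e2 : ∫ x, φ x * (a * p x + b * q x) ∂μ =
      a * ∫ x, φ x * p x ∂μ + b * ∫ x, φ x * q x ∂μ := by
    simp only [mul_comm (φ _)]
    rw [← integral_const_mul, ← integral_const_mul, ← integral_add (i3.const_mul a)
      (i4.const_mul b)]
    exact integral_congr_ae (Eventually.of_forall fun x => by ring)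
  rw [e1, e2, hfp φ hφ hφc, hgq φ hφ hφc]
  ring

end WeakDerivative

/-! ### Absolute continuity of marginals -/

section Marginal

variable {X : Type*} [NormedAddCommGroup X] [NormedSpace ℝ X] [FiniteDimensional ℝ X]
  [MeasurableSpace X] [BorelSpace X]
  {Z : Type*} [NormedAddCommGroup Z] [NormedSpace ℝ Z] [FiniteDimensional ℝ Z]
  {m μ : Measure X} {f q : X → ℝ} {v : X}

/-- Testing the derivative with `h(π x) φ(x)`, where `h` tends to the indicator function of `N`,
only `φ` is differentiated because `π v = 0`. In the limit the left-hand side vanishes. -/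
lemma measure_inter_preimage_compact_eq_zero (hf : Integrable f m)
    (hq : Integrable q μ) (hfq : IsWeakDeriv m μ f v q) (π : X →L[ℝ] Z) (hπ : π v = 0) {N : Set Z}
    (hN : IsCompact N) (hmN : m (π ⁻¹' N) = 0) : μ ({x | q x ≠ 0} ∩ π ⁻¹' N) = 0 := by
  have hpos : ∀ k : ℕ, 0 < 1 / ((k : ℝ) + 1) := fun k => by positivity
  choose h hs _ h01 h1 h0 using fun k : ℕ =>
    exists_smooth_cutoff hN (Metric.isOpen_thickening (δ := 1 / ((k : ℝ) + 1)))
      (Metric.self_subset_thickening (hpos k) N)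
  -- `h k` converges pointwise to the indicator function of `N`
  have hlim : ∀ z, Tendsto (fun k => h k z) atTop (𝓝 (N.indicator (fun _ => (1 : ℝ)) z)) := by
    intro z
    by_cases hz : z ∈ N
    · rw [Set.indicator_of_mem hz]
      simp only [fun k => h1 k z hz]
      exact tendsto_const_nhds
    · rw [Set.indicator_of_notMem hz]
      refine tendsto_const_nhds.congr' ?_
      have hex : ∃ δ > 0, z ∉ Metric.thickening δ N := by
        have := hN.isClosed
        rw [← this.closure_eq, Metric.closure_eq_iInter_thickening] at hz
        simp only [Set.mem_iInter, not_forall] at hz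
        obtain ⟨δ, hδ, h⟩ := hz
        exact ⟨δ, hδ, h⟩
      obtain ⟨δ, hδ, hzδ⟩ := hex
      filter_upwards [(tendsto_one_div_add_atTop_nhds_zero_nat (𝕜 := ℝ)).eventually
        (gt_mem_nhds hδ)] with k hk
      exact (h0 k z fun hz' => hzδ (Metric.thickening_mono hk.le N hz')).symm
  have hNm : MeasurableSet (π ⁻¹' N) := (hN.isClosed.preimage π.continuous).measurableSet
  have hNi : ∀ x, N.indicator (fun _ => (1 : ℝ)) (π x) = (π ⁻¹' N).indicator (fun _ => 1) x := by
    intro x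
    by_cases hx : π x ∈ N
    · rw [Set.indicator_of_mem hx, Set.indicator_of_mem (s := π ⁻¹' N) hx]
    · rw [Set.indicator_of_notMem hx, Set.indicator_of_notMem (s := π ⁻¹' N) hx]
  have hdom : ∀ {ρ : Measure X} {r : X → ℝ}, Integrable r ρ →
      Tendsto (fun k => ∫ x, h k (π x) * r x ∂ρ) atTop
        (𝓝 (∫ x, (π ⁻¹' N).indicator (fun _ => (1 : ℝ)) x * r x ∂ρ)) := by
    intro ρ r hr
    refine tendsto_integral_of_dominated_convergence (fun x => ‖r x‖) ?_ hr.norm ?_ ?_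
    · intro k
      exact ((hs k).continuous.comp π.continuous).aestronglyMeasurable.mul hr.aestronglyMeasurable
    · intro k
      refine Eventually.of_forall fun x => ?_
      rw [norm_mul, Real.norm_eq_abs, abs_of_nonneg (h01 k _).1]
      exact mul_le_of_le_one_left (norm_nonneg _) (h01 k _).2
    · refine Eventually.of_forall fun x => ?_
      rw [← hNi]
      exact (hlim (π x)).mul_const _
  have hzero : ∀ φ : X → ℝ, ContDiff ℝ ∞ φ → HasCompactSupport φ →
      ∫ x, φ x • ((π ⁻¹' N).indicator (fun _ => (1 : ℝ)) x * q x) ∂μ = 0 := by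
    intro φ hφ hφc
    have hc : Continuous fun x => fderiv ℝ φ x v :=
      (hφ.continuous_fderiv (by simp)).clm_apply continuous_const
    have L1 := hdom (integrable_mul_testFunction hf hc (hφc.fderiv_apply (𝕜 := ℝ) v))
    have L2 := hdom (integrable_mul_testFunction hq hφ.continuous hφc)
    have hk : ∀ k, ∫ x, h k (π x) * (f x * fderiv ℝ φ x v) ∂m =
        -∫ x, h k (π x) * (q x * φ x) ∂μ := by
      intro k
      have hd : ∀ x, fderiv ℝ (fun x => h k (π x) * φ x) x v = h k (π x) * fderiv ℝ φ x v := by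
        intro x
        have d1 : HasFDerivAt (fun x => h k (π x)) ((fderiv ℝ (h k) (π x)).comp π) x :=
          (((hs k).differentiable (by simp)).differentiableAt.hasFDerivAt).comp x π.hasFDerivAt
        have d2 := ((hφ.differentiable (by simp)) x).hasFDerivAt
        rw [fderiv_fun_mul d1.differentiableAt d2.differentiableAt, d1.fderiv]
        simp [hπ]
      have := hfq (fun x => h k (π x) * φ x)
        ((((hs k).comp π.contDiff).mul hφ).of_le (by norm_cast)) hφc.mul_left
      simp only [hd] at this
      rw [integral_congr_ae (Eventually.of_forall fun x =>
        show h k (π x) * (f x * fderiv ℝ φ x v) = f x * (h k (π x) * fderiv ℝ φ x v) by ring),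
        this]
      congr 1
      exact integral_congr_ae (Eventually.of_forall fun x => by ring)
    simp only [hk] at L1
    have hE := tendsto_nhds_unique L1 L2.neg
    have hz : ∫ x, (π ⁻¹' N).indicator (fun _ => (1 : ℝ)) x * (f x * fderiv ℝ φ x v) ∂m = 0 := by
      refine integral_eq_zero_of_ae ?_
      have : ∀ᵐ x ∂m, x ∉ π ⁻¹' N := measure_eq_zero_iff_ae_notMem.1 hmN
      filter_upwards [this] with x hx
      simp [Set.indicator_of_notMem hx]
    rw [hz] at hE
    rw [integral_congr_ae (Eventually.of_forall fun x =>
        show φ x • ((π ⁻¹' N).indicator (fun _ => (1 : ℝ)) x * q x) =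
          (π ⁻¹' N).indicator (fun _ => (1 : ℝ)) x * (q x * φ x) by rw [smul_eq_mul]; ring)]
    linarith
  have hloc : LocallyIntegrable (fun x => (π ⁻¹' N).indicator (fun _ => (1 : ℝ)) x * q x) μ := by
    refine (Integrable.bdd_mul (c := 1) hq ?_ ?_).locallyIntegrable
    · exact (measurable_const.indicator hNm).aestronglyMeasurable
    · refine Eventually.of_forall fun x => ?_
      by_cases hx : x ∈ π ⁻¹' N
      · simp [Set.indicator_of_mem hx]
      · simp [Set.indicator_of_notMem hx]
  have hae := ae_eq_zero_of_integral_contDiff_smul_eq_zero hloc hzero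
  rw [measure_eq_zero_iff_ae_notMem]
  filter_upwards [hae] with x hx hmem
  rw [Set.indicator_of_mem hmem.2, one_mul] at hx
  exact hmem.1 hx

variable [MeasurableSpace Z] [BorelSpace Z]

/-- Where its density `q` does not vanish, the derivative measure in a direction `v` does not
charge the `m`-null sets which are preimages under a linear map killing `v`. -/
lemma measure_inter_preimage_eq_zero [IsFiniteMeasure μ] (hf : Integrable f m)
    (hqm : Measurable q) (hq : Integrable q μ) (hfq : IsWeakDeriv m μ f v q) (π : X →L[ℝ] Z)
    (hπ : π v = 0) {N : Set Z} (hN : MeasurableSet N) (hmN : m (π ⁻¹' N) = 0) :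
    μ ({x | q x ≠ 0} ∩ π ⁻¹' N) = 0 := by
  by_contra hne
  have hQ : MeasurableSet {x | q x ≠ 0} := (measurableSet_singleton (0 : ℝ)).compl.preimage hqm
  have hρ : ∀ A, MeasurableSet A →
      (μ.restrict {x | q x ≠ 0}).map π A = μ ({x | q x ≠ 0} ∩ π ⁻¹' A) := by
    intro A hA
    rw [Measure.map_apply π.continuous.measurable hA,
      Measure.restrict_apply (π.continuous.measurable hA), Set.inter_comm]
  obtain ⟨K, hKN, hK, hpos⟩ := hN.exists_lt_isCompact_of_ne_top
    (μ := (μ.restrict {x | q x ≠ 0}).map π) (measure_ne_top _ _) (r := 0)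
    (by rw [hρ N hN]; exact pos_iff_ne_zero.2 hne)
  rw [hρ K hK.measurableSet, measure_inter_preimage_compact_eq_zero hf hq hfq π hπ hK
    (measure_mono_null (Set.preimage_mono hKN) hmN)] at hpos
  exact lt_irrefl _ hpos

end Marginal

/-! ### Vanishing of minors on null sets -/

section Core

variable {X : Type*} [NormedAddCommGroup X] [NormedSpace ℝ X] [FiniteDimensional ℝ X]
  [MeasurableSpace X] [BorelSpace X]
  {Z : Type*} [NormedAddCommGroup Z] [NormedSpace ℝ Z] [FiniteDimensional ℝ Z]
  [MeasurableSpace Z] [BorelSpace Z]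

/-- A Lebesgue null set has zero measure where the `2 × 2` block of the density of the derivative is
close to the identity. -/
lemma measure_null_of_near_id {m μ : Measure X} [m.IsAddHaarMeasure] [IsFiniteMeasure μ]
    (ζ : Measure Z) [ζ.IsAddHaarMeasure]
    (e : X ≃L[ℝ] Z × (ℝ × ℝ)) {f₁ f₂ q₁₁ q₁₂ q₂₁ q₂₂ : X → ℝ} {L : ℝ}
    (hf₁ : Integrable f₁ m)
    (h₁₁ : Measurable q₁₁) (h₁₂ : Measurable q₁₂) (h₂₁ : Measurable q₂₁) (h₂₂ : Measurable q₂₂)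
    (b₁₁ : ∀ᵐ x ∂μ, |q₁₁ x| ≤ L) (b₁₂ : ∀ᵐ x ∂μ, |q₁₂ x| ≤ L)
    (b₂₁ : ∀ᵐ x ∂μ, |q₂₁ x| ≤ L) (b₂₂ : ∀ᵐ x ∂μ, |q₂₂ x| ≤ L)
    (w₁₁ : IsWeakDeriv m μ f₁ (e.symm (0, 1, 0)) q₁₁)
    (w₁₂ : IsWeakDeriv m μ f₁ (e.symm (0, 0, 1)) q₁₂)
    (w₂₁ : IsWeakDeriv m μ f₂ (e.symm (0, 1, 0)) q₂₁)
    (w₂₂ : IsWeakDeriv m μ f₂ (e.symm (0, 0, 1)) q₂₂)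
    {S : Set X} (hS : MeasurableSet S) (hmS : m S = 0) :
    μ (S ∩ {x | |q₁₁ x - 1| ≤ 1 / 100 ∧ |q₁₂ x| ≤ 1 / 100 ∧ |q₂₁ x| ≤ 1 / 100 ∧
      |q₂₂ x - 1| ≤ 1 / 100}) = 0 := by
  set Q : Set X := {x | |q₁₁ x - 1| ≤ 1 / 100 ∧ |q₁₂ x| ≤ 1 / 100 ∧ |q₂₁ x| ≤ 1 / 100 ∧
      |q₂₂ x - 1| ≤ 1 / 100} with hQdef
  have hQ : MeasurableSet Q := by
    have hle : ∀ g : X → ℝ, Measurable g → MeasurableSet {x | |g x| ≤ 1 / 100} := fun g hg =>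
      measurableSet_le (by fun_prop) measurable_const
    exact (hle _ (h₁₁.sub_const 1)).inter ((hle _ h₁₂).inter ((hle _ h₂₁).inter
      (hle _ (h₂₂.sub_const 1))))
  set π : X →L[ℝ] Z := (ContinuousLinearMap.fst ℝ Z (ℝ × ℝ)).comp (e : X →L[ℝ] Z × (ℝ × ℝ)) with hπ
  -- null sets correspond to each other under the linear isomorphism `e`
  have hac : m.map e ≪ ζ.prod (volume : Measure (ℝ × ℝ)) := by
    rw [Measure.isAddLeftInvariant_eq_smul (m.map e) (ζ.prod (volume : Measure (ℝ × ℝ)))]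
    exact Measure.smul_absolutelyContinuous
  have hac' : ζ.prod (volume : Measure (ℝ × ℝ)) ≪ m.map e := by
    rw [Measure.isAddLeftInvariant_eq_smul (ζ.prod (volume : Measure (ℝ × ℝ))) (m.map e)]
    exact Measure.smul_absolutelyContinuous
  have heS : MeasurableSet (e.symm ⁻¹' S) := e.symm.continuous.measurable hS
  have hprod : ζ.prod (volume : Measure (ℝ × ℝ)) (e.symm ⁻¹' S) = 0 := by
    apply hac'
    rw [Measure.map_apply e.continuous.measurable heS]
    have : e ⁻¹' (e.symm ⁻¹' S) = S := by ext x; simp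
    rw [this, hmS]
  -- the parameters with a non-null slice form a null set, so they can be discarded
  set N : Set Z := {z | volume (Prod.mk z ⁻¹' (e.symm ⁻¹' S) : Set (ℝ × ℝ)) ≠ 0} with hN
  have hNm : MeasurableSet N :=
    (measurableSet_singleton (0 : ENNReal)).compl.preimage (measurable_measure_prodMk_left heS)
  have hN0 : ζ N = 0 := (Measure.measure_prod_null heS).1 hprod
  have hmN : m (π ⁻¹' N) = 0 := by
    have h1 : ζ.prod (volume : Measure (ℝ × ℝ)) (N ×ˢ Set.univ) = 0 := by
      rw [Measure.prod_prod, hN0, zero_mul]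
    have h2 := hac h1
    rw [Measure.map_apply e.continuous.measurable (hNm.prod MeasurableSet.univ)] at h2
    refine measure_mono_null ?_ h2
    intro x hx
    exact ⟨hx, trivial⟩
  have hbad : μ ({x | q₁₁ x ≠ 0} ∩ π ⁻¹' N) = 0 :=
    measure_inter_preimage_eq_zero hf₁ h₁₁
      (Integrable.of_bound h₁₁.aestronglyMeasurable L b₁₁) w₁₁ π (by simp [hπ]) hNm hmN
  have hgood : μ ((S ∩ Q) \ π ⁻¹' N) = 0 := by
    by_contra hne
    have hmeas : MeasurableSet ((S ∩ Q) \ π ⁻¹' N) :=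
      (hS.inter hQ).diff (π.continuous.measurable hNm)
    obtain ⟨K, hKE, hK, hpos⟩ := hmeas.exists_lt_isCompact_of_ne_top (μ := μ)
      (measure_ne_top _ _) (pos_iff_ne_zero.2 hne)
    refine hpos.ne' (measure_compact_eq_zero e h₁₁ h₁₂ h₂₁ h₂₂ b₁₁ b₁₂ b₂₁ b₂₂
      (fun φ hφ hφc => w₁₁.integral_fderiv_eq w₁₂ hφ hφc)
      (fun φ hφ hφc => w₂₂.integral_fderiv_eq w₂₁ hφ hφc) hK (fun x hx => (hKE hx).1.2) ?_)
    intro z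
    by_cases hz : z ∈ N
    · have : {v : ℝ × ℝ | e.symm (z, v) ∈ K} = ∅ := by
        refine Set.eq_empty_of_forall_notMem fun v hv => (hKE hv).2 ?_
        simpa [hπ] using hz
      rw [this, measure_empty]
    · have hz' : volume (Prod.mk z ⁻¹' (e.symm ⁻¹' S) : Set (ℝ × ℝ)) = 0 := by
        by_contra h
        exact hz h
      exact measure_mono_null (fun v hv => (hKE hv).1.1) hz'
  refine measure_mono_null (t := ({x | q₁₁ x ≠ 0} ∩ π ⁻¹' N) ∪ ((S ∩ Q) \ π ⁻¹' N)) ?_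
    (measure_union_null hbad hgood)
  intro x hx
  by_cases hxN : x ∈ π ⁻¹' N
  · refine Or.inl ⟨?_, hxN⟩
    intro h0
    have := hx.2.1
    rw [h0] at this
    norm_num at this
  · exact Or.inr ⟨hx, hxN⟩

lemma exists_rat_combination {a b c d : ℝ} (hdet : a * d - b * c ≠ 0) (s t : ℝ) :
    ∃ r : ℚ × ℚ, |r.1 * a + r.2 * c - s| ≤ 1 / 100 ∧ |r.1 * b + r.2 * d - t| ≤ 1 / 100 := by
  have hdense : DenseRange (Prod.map ((↑) : ℚ → ℝ) ((↑) : ℚ → ℝ)) :=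
    Rat.denseRange_cast.prodMap Rat.denseRange_cast
  obtain ⟨x, y, hx, hy⟩ : ∃ x y : ℝ, x * a + y * c - s = 0 ∧ x * b + y * d - t = 0 := by
    refine ⟨(s * d - t * c) / (a * d - b * c), (t * a - s * b) / (a * d - b * c), ?_, ?_⟩
    · rw [div_mul_eq_mul_div, div_mul_eq_mul_div, ← add_div, div_sub' hdet,
        div_eq_zero_iff]
      left; ring
    · rw [div_mul_eq_mul_div, div_mul_eq_mul_div, ← add_div, div_sub' hdet,
        div_eq_zero_iff]
      left; ring
  obtain ⟨r, hr⟩ := hdense.exists_mem_open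
    (s := {x : ℝ × ℝ | |x.1 * a + x.2 * c - s| < 1 / 100} ∩
      {x : ℝ × ℝ | |x.1 * b + x.2 * d - t| < 1 / 100})
    ((isOpen_lt (by fun_prop) continuous_const).inter
      (isOpen_lt (by fun_prop) continuous_const))
    ⟨(x, y), by simp [hx], by simp [hy]⟩
  exact ⟨r, le_of_lt hr.1, le_of_lt hr.2⟩

/-- A `2 × 2` minor of the density of the derivative vanishes almost everywhere on every
Lebesgue null set. -/
lemma measure_null_of_minor_ne_zero {m μ : Measure X} [m.IsAddHaarMeasure] [IsFiniteMeasure μ]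
    (ζ : Measure Z) [ζ.IsAddHaarMeasure]
    (e : X ≃L[ℝ] Z × (ℝ × ℝ)) {f₁ f₂ p₁₁ p₁₂ p₂₁ p₂₂ : X → ℝ}
    (hf₁ : Integrable f₁ m) (hf₂ : Integrable f₂ m)
    (h₁₁ : Measurable p₁₁) (h₁₂ : Measurable p₁₂) (h₂₁ : Measurable p₂₁) (h₂₂ : Measurable p₂₂)
    (b₁₁ : ∀ᵐ x ∂μ, |p₁₁ x| ≤ 1) (b₁₂ : ∀ᵐ x ∂μ, |p₁₂ x| ≤ 1)
    (b₂₁ : ∀ᵐ x ∂μ, |p₂₁ x| ≤ 1) (b₂₂ : ∀ᵐ x ∂μ, |p₂₂ x| ≤ 1)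
    (w₁₁ : IsWeakDeriv m μ f₁ (e.symm (0, 1, 0)) p₁₁)
    (w₁₂ : IsWeakDeriv m μ f₁ (e.symm (0, 0, 1)) p₁₂)
    (w₂₁ : IsWeakDeriv m μ f₂ (e.symm (0, 1, 0)) p₂₁)
    (w₂₂ : IsWeakDeriv m μ f₂ (e.symm (0, 0, 1)) p₂₂)
    {S : Set X} (hS : MeasurableSet S) (hmS : m S = 0) :
    μ (S ∩ {x | p₁₁ x * p₂₂ x - p₁₂ x * p₂₁ x ≠ 0}) = 0 := by
  have hint : ∀ {p : X → ℝ}, Measurable p → (∀ᵐ x ∂μ, |p x| ≤ 1) → Integrable p μ :=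
    fun hp hb => Integrable.of_bound hp.aestronglyMeasurable 1 hb
  have hbd : ∀ {p q : X → ℝ} (a b L : ℝ), (∀ᵐ x ∂μ, |p x| ≤ 1) → (∀ᵐ x ∂μ, |q x| ≤ 1) →
      |a| + |b| ≤ L → ∀ᵐ x ∂μ, |a * p x + b * q x| ≤ L := by
    intro p q a b L hp hq hL
    filter_upwards [hp, hq] with x hx hy
    refine (abs_add_le _ _).trans (le_trans ?_ hL)
    rw [abs_mul, abs_mul]
    exact add_le_add (mul_le_of_le_one_right (abs_nonneg a) hx)
      (mul_le_of_le_one_right (abs_nonneg b) hy)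
  refine measure_mono_null (t := ⋃ (r : ℚ × ℚ) (r' : ℚ × ℚ), S ∩
    {x | |(r.1 * p₁₁ x + r.2 * p₂₁ x) - 1| ≤ 1 / 100 ∧
      |r.1 * p₁₂ x + r.2 * p₂₂ x| ≤ 1 / 100 ∧ |r'.1 * p₁₁ x + r'.2 * p₂₁ x| ≤ 1 / 100 ∧
      |(r'.1 * p₁₂ x + r'.2 * p₂₂ x) - 1| ≤ 1 / 100}) ?_ ?_
  · rintro x ⟨hxS, hx⟩
    obtain ⟨r, h1, h2⟩ := exists_rat_combination hx 1 0
    obtain ⟨r', h3, h4⟩ := exists_rat_combination hx 0 1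
    rw [sub_zero] at h2 h3
    exact Set.mem_iUnion₂.2 ⟨r, r', hxS, h1, h2, h3, h4⟩
  · refine measure_iUnion_null fun r => measure_iUnion_null fun r' => ?_
    have l1 := le_max_left (|(r.1 : ℝ)| + |(r.2 : ℝ)|) (|(r'.1 : ℝ)| + |(r'.2 : ℝ)|)
    have l2 := le_max_right (|(r.1 : ℝ)| + |(r.2 : ℝ)|) (|(r'.1 : ℝ)| + |(r'.2 : ℝ)|)
    exact measure_null_of_near_id ζ e (f₁ := fun x => r.1 * f₁ x + r.2 * f₂ x)
      (f₂ := fun x => r'.1 * f₁ x + r'.2 * f₂ x)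
      ((hf₁.const_mul _).add (hf₂.const_mul _)) (by fun_prop) (by fun_prop) (by fun_prop)
      (by fun_prop) (hbd _ _ _ b₁₁ b₂₁ l1) (hbd _ _ _ b₁₂ b₂₂ l1) (hbd _ _ _ b₁₁ b₂₁ l2)
      (hbd _ _ _ b₁₂ b₂₂ l2)
      (w₁₁.linearCombination hf₁ hf₂ (hint h₁₁ b₁₁) (hint h₂₁ b₂₁) w₂₁ _ _)
      (w₁₂.linearCombination hf₁ hf₂ (hint h₁₂ b₁₂) (hint h₂₂ b₂₂) w₂₂ _ _)
      (w₁₁.linearCombination hf₁ hf₂ (hint h₁₁ b₁₁) (hint h₂₁ b₂₁) w₂₁ _ _)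
      (w₁₂.linearCombination hf₁ hf₂ (hint h₁₂ b₁₂) (hint h₂₂ b₂₂) w₂₂ _ _) hS hmS

end Core

/-! ### Coordinates and rank -/

lemma rank_eq_one_of_minors {k n : ℕ} {A : Matrix (Fin k) (Fin n) ℝ}
    (hA : ∑ j, ∑ l, (A j l) ^ 2 = 1)
    (hmin : ∀ j₁ j₂ l₁ l₂, A j₁ l₁ * A j₂ l₂ - A j₁ l₂ * A j₂ l₁ = 0) : A.rank = 1 := by
  obtain ⟨j, l, hjl⟩ : ∃ j l, A j l ≠ 0 := by
    by_contra! h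
    simp [h] at hA
  have hvec : A = Matrix.vecMulVec (fun i => A i l / A j l) (A j) := by
    ext i c
    rw [Matrix.vecMulVec_apply, div_mul_eq_mul_div, eq_div_iff hjl]
    linarith [hmin i j c l]
  refine le_antisymm ?_ ?_
  · rw [hvec]
    exact Matrix.rank_vecMulVec_le _ _
  · rw [Nat.one_le_iff_ne_zero]
    intro h
    rw [Matrix.rank, Submodule.finrank_eq_zero, LinearMap.range_eq_bot] at h
    have := congrFun (LinearMap.congr_fun h (Pi.single l 1)) j
    exact hjl (by simpa using this)

/-- The linear isomorphism `ℝⁿ ≃ ℝⁿ⁻² × ℝ²` which separates the coordinates `l₁` and `l₂` from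
all the others. -/
def splitCoordinates {n : ℕ} {l₁ l₂ : Fin n} (h : l₁ ≠ l₂) :
    EuclideanSpace ℝ (Fin n) ≃L[ℝ] ({i : Fin n // i ≠ l₁ ∧ i ≠ l₂} → ℝ) × (ℝ × ℝ) :=
  LinearEquiv.toContinuousLinearEquiv
    { toFun := fun x => (fun i => x i, (x l₁, x l₂))
      map_add' := fun x y => rfl
      map_smul' := fun c x => rfl
      invFun := fun y => WithLp.toLp 2 fun i =>
        if h₁ : i = l₁ then y.2.1 else if h₂ : i = l₂ then y.2.2 else y.1 ⟨i, h₁, h₂⟩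
      left_inv := fun x => by
        ext i
        by_cases h₁ : i = l₁
        · simp [h₁]
        · by_cases h₂ : i = l₂
          · simp [h₂, h.symm]
          · simp [h₁, h₂]
      right_inv := fun y => by
        refine Prod.ext ?_ (Prod.ext ?_ ?_)
        · ext ⟨i, h₁, h₂⟩
          simp [h₁, h₂]
        · simp
        · simp [h.symm] }

lemma splitCoordinates_apply {n : ℕ} {l₁ l₂ : Fin n} (h : l₁ ≠ l₂)
    (x : EuclideanSpace ℝ (Fin n)) :
    splitCoordinates h x =
      ((fun i : {i : Fin n // i ≠ l₁ ∧ i ≠ l₂} => x i), (x l₁, x l₂)) := rfl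

lemma splitCoordinates_symm_fst {n : ℕ} {l₁ l₂ : Fin n} (h : l₁ ≠ l₂) :
    (splitCoordinates h).symm (0, 1, 0) = EuclideanSpace.single l₁ (1 : ℝ) := by
  rw [ContinuousLinearEquiv.symm_apply_eq]
  refine Prod.ext ?_ (Prod.ext ?_ ?_)
  · ext ⟨i, h₁, h₂⟩
    simp [splitCoordinates_apply, h₁]
  · simp [splitCoordinates_apply]
  · simp [splitCoordinates_apply, h.symm]

lemma splitCoordinates_symm_snd {n : ℕ} {l₁ l₂ : Fin n} (h : l₁ ≠ l₂) :
    (splitCoordinates h).symm (0, 0, 1) = EuclideanSpace.single l₂ (1 : ℝ) := by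
  rw [ContinuousLinearEquiv.symm_apply_eq]
  refine Prod.ext ?_ (Prod.ext ?_ ?_)
  · ext ⟨i, h₁, h₂⟩
    simp [splitCoordinates_apply, h₂]
  · simp [splitCoordinates_apply, h]
  · simp [splitCoordinates_apply]

/-- Alberti's rank one theorem: for `f ∈ BV(ℝⁿ;ℝᵏ)`, the density `dDf/d|Df|(x)` has rank
one for `|Dˢf|`-a.e. `x ∈ ℝⁿ`, where `Dˢf` is the singular part of `Df` with respect to
Lebesgue measure; in the polar presentation `|Dˢf|` is the singular part of `ν = |Df|`. -/
theorem alberti_rank_one (n k : ℕ)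
    (f : EuclideanSpace ℝ (Fin n) → EuclideanSpace ℝ (Fin k))
    (ν : Measure (EuclideanSpace ℝ (Fin n)))
    (σ : EuclideanSpace ℝ (Fin n) → Matrix (Fin k) (Fin n) ℝ)
    (hf : IsBVOn n k Set.univ f ν σ) :
    ∀ᵐ x ∂(ν.singularPart volume), (σ x).rank = 1 := by
  have hfin : IsFiniteMeasure ν := ⟨hf.finite⟩
  have hfi : ∀ j, Integrable (fun x => f x j) volume := by
    intro j
    have h : Integrable f volume := integrableOn_univ.1 hf.integrable
    exact (EuclideanSpace.proj (𝕜 := ℝ) (ι := Fin k) j).integrable_comp h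
  have hbd : ∀ j l, ∀ᵐ x ∂ν, |σ x j l| ≤ 1 := by
    intro j l
    filter_upwards [hf.unit] with x hx
    rw [← sq_le_one_iff_abs_le_one, ← hx]
    calc (σ x j l) ^ 2 ≤ ∑ l, (σ x j l) ^ 2 :=
          Finset.single_le_sum (f := fun l => (σ x j l) ^ 2) (fun _ _ => sq_nonneg _)
            (Finset.mem_univ l)
      _ ≤ _ := Finset.single_le_sum (f := fun j => ∑ l, (σ x j l) ^ 2)
            (fun _ _ => Finset.sum_nonneg fun _ _ => sq_nonneg _) (Finset.mem_univ j)
  have hweak : ∀ j l, IsWeakDeriv volume ν (fun x => f x j) (EuclideanSpace.single l (1 : ℝ))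
      (fun x => σ x j l) := by
    intro j l φ hφ hφc
    have := hf.parts φ hφ hφc (Set.subset_univ _) j l
    rwa [Measure.restrict_univ] at this
  obtain ⟨T, hT, hT1, hT2⟩ := Measure.mutuallySingular_singularPart ν volume
  have hle : ν.singularPart volume ≤ ν := Measure.singularPart_le ν volume
  have hac : ν.singularPart volume ≪ ν := Measure.absolutelyContinuous_of_le hle
  -- the singular part lives on the Lebesgue null set `Tᶜ`, where all minors vanish
  have hmin : ∀ j₁ j₂ l₁ l₂, ∀ᵐ x ∂(ν.singularPart volume),
      σ x j₁ l₁ * σ x j₂ l₂ - σ x j₁ l₂ * σ x j₂ l₁ = 0 := by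
    intro j₁ j₂ l₁ l₂
    by_cases hl : l₁ = l₂
    · exact Eventually.of_forall fun x => by rw [hl]; ring
    have h0 := measure_null_of_minor_ne_zero (m := volume) (μ := ν) volume (splitCoordinates hl)
      (hfi j₁) (hfi j₂) (hf.meas j₁ l₁) (hf.meas j₁ l₂) (hf.meas j₂ l₁) (hf.meas j₂ l₂)
      (hbd j₁ l₁) (hbd j₁ l₂) (hbd j₂ l₁) (hbd j₂ l₂)
      (by rw [splitCoordinates_symm_fst]; exact hweak j₁ l₁)
      (by rw [splitCoordinates_symm_snd]; exact hweak j₁ l₂)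
      (by rw [splitCoordinates_symm_fst]; exact hweak j₂ l₁)
      (by rw [splitCoordinates_symm_snd]; exact hweak j₂ l₂) hT.compl hT2
    filter_upwards [measure_eq_zero_iff_ae_notMem.1 (hac h0),
      measure_eq_zero_iff_ae_notMem.1 hT1] with x hx hxT
    by_contra hne
    exact hx ⟨hxT, hne⟩
  have hall : ∀ᵐ x ∂(ν.singularPart volume), ∀ j₁ j₂ l₁ l₂,
      σ x j₁ l₁ * σ x j₂ l₂ - σ x j₁ l₂ * σ x j₂ l₁ = 0 := by
    simp only [ae_all_iff]
    exact hmin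
  filter_upwards [hall, hac.ae_le hf.unit] with x hx hx1
  exact rank_eq_one_of_minors hx1 hx
end
end

section
/- The rank one theorem holds in full generality if and only if it holds for planar BV functions on the unit disc; precisely: the statement 'for all n, k ∈ ℕ and all f ∈ BV(ℝⁿ;ℝᵏ), dDf/d|Df|(x) has rank one for |Dˢf|-a.e. x ∈ ℝⁿ' holds if and only if for every f ∈ BV(B(0,1);ℝ²) (with B(0,1) ⊂ ℝ² the open unit disc), dDf/d|Df|(x) has rank one for |Dˢf|-a.e. x ∈ B(0,1). -/
/-!
The argument works throughout with a derivative measure written as `Df = g μ` for an arbitrary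
matrix density `g` (`WeakBV`), without the normalisation `|g| = 1`. By polar decomposition,
the rank one theorem for `f` says precisely that `g` has rank at most one `μ`-almost everywhere on
each Lebesgue-null set (`WeakBV.rank_le_one`, `ae_of_singularPart`); conversely, a unit density of
rank at most one has rank exactly one.

*From the whole space to the disc.* If `f ∈ BV(B(0,1))` and `χ` is a cut-off function supported in
the disc, then `χ f`, extended by zero, is in `BV(ℝ²)`, and `D(χ f) = χ Df + (f ⊗ ∇χ) dx`. Both
derivatives have the same singular part where `χ = 1`, so an exhaustion of the disc by such cut-offs
gives the claim (`weakBV_cutoff`, `rank_one_ball_of_univ`).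

*From the disc to all dimensions.* Translating and covering `ℝ²` by countably many discs, the
density of `Df` for `f ∈ BV(ℝ²;ℝ²)` has zero determinant almost everywhere on null sets
(`det_eq_zero_of_disc`). For `f ∈ BV(ℝⁿ;ℝᵏ)` it suffices to show that each `2 × 2` minor of the
density vanishes almost everywhere on null sets. The rows of the minor select two components of
`f`, the columns select a coordinate plane, and `ℝⁿ` is split as `F × ℝ²` accordingly. The total
variation is disintegrated over its marginal `τ` on `F`, and `τ` is decomposed with respect to
Lebesgue measure of `F` (`det_eq_zero_of_slices`). Testing with products `ψ(z) φ(y)` shows that over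
the singular part of `τ` the selected block of the density is zero, and that over the absolutely
continuous part the slices `f(z, ·)` are planar `BV` functions whose derivative has the sliced
block as density, up to a scalar. As almost all slices of a null set are null, the planar case
applies on each slice. The exceptional sets of `z` are made independent of `φ` by a countable
family of test functions which is dense in `C¹` (`exists_countable_test`).
-/

open MeasureTheory Filter

noncomputable section

/-! ### Linear algebra -/

/-- A matrix all of whose `2 × 2` minors vanish has rank at most one. -/
lemma rank_le_one_of_minors {n k : ℕ} (A : Matrix (Fin k) (Fin n) ℝ)
    (h : ∀ i j l m, A i l * A j m - A i m * A j l = 0) : A.rank ≤ 1 := by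
  by_cases hA : ∃ i l, A i l ≠ 0
  · obtain ⟨i, l, hil⟩ := hA
    have : A = Matrix.vecMulVec (fun j => A j l / A i l) (fun m => A i m) := by
      ext j m
      rw [Matrix.vecMulVec_apply, div_mul_eq_mul_div, eq_div_iff hil]
      linarith [h i j l m]
    rw [this]
    exact Matrix.rank_vecMulVec_le _ _
  · push Not at hA
    have : A = 0 := by ext i l; exact hA i l
    simp [this]

lemma det_eq_zero_of_rank_le_one (A : Matrix (Fin 2) (Fin 2) ℝ) (h : A.rank ≤ 1) :
    A.det = 0 := by
  by_contra hd
  have := Matrix.rank_of_isUnit A ((Matrix.isUnit_iff_isUnit_det A).2 (isUnit_iff_ne_zero.2 hd))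
  simp at this
  omega

lemma rank_ne_zero_of_unit {n k : ℕ} (A : Matrix (Fin k) (Fin n) ℝ)
    (h : ∑ j, ∑ l, (A j l) ^ 2 = 1) : A.rank ≠ 0 := by
  intro h0
  have hA : A = 0 := by
    rw [Matrix.rank, Module.finrank_eq_zero_iff_of_free] at h0
    have h1 : LinearMap.range A.mulVecLin = ⊥ := Submodule.subsingleton_iff_eq_bot.1 h0
    rw [LinearMap.range_eq_bot] at h1
    ext i l
    have := congrFun (LinearMap.congr_fun h1 (Pi.single l 1)) i
    simpa using this
  simp [hA] at h

/-! ### Measures -/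

/-- A property valid almost everywhere for the singular part of `μ` holds `μ`-almost everywhere
on every Lebesgue-null set. -/
lemma ae_of_singularPart {X : Type*} [MeasurableSpace X] {μ vol : Measure X}
    [μ.HaveLebesgueDecomposition vol] {p : X → Prop}
    (h : ∀ᵐ x ∂μ.singularPart vol, p x) {N : Set X} (hN : vol N = 0) :
    ∀ᵐ x ∂μ, x ∈ N → p x := by
  rw [Measure.haveLebesgueDecomposition_add μ vol, ae_add_measure_iff]
  refine ⟨h.mono fun x hx _ => hx, ?_⟩
  have : ∀ᵐ x ∂vol, x ∉ N := measure_eq_zero_iff_ae_notMem.1 hN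
  exact (withDensity_absolutelyContinuous vol _).ae_le (this.mono fun x hx h => (hx h).elim)

/-- Gluing of `A · vol + B · μ` into a single density with respect to `μˢ + vol`: the set `Z` is a
`vol`-null set carrying `μˢ`. -/
def glue {X : Type*} [MeasurableSpace X] (μ vol : Measure X) (Z : Set X) (A B : X → ℝ) : X → ℝ :=
  open Classical in fun x => if x ∈ Z then B x else A x + (μ.rnDeriv vol x).toReal * B x

lemma exists_carrier {X : Type*} [MeasurableSpace X] (μ vol : Measure X) :
    ∃ Z : Set X, MeasurableSet Z ∧ vol Z = 0 ∧ μ.singularPart vol Zᶜ = 0 := by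
  obtain ⟨s, hs, h1, h2⟩ := Measure.mutuallySingular_singularPart μ vol
  exact ⟨sᶜ, hs.compl, h2, by simpa using h1⟩

section glue

variable {X : Type*} [MeasurableSpace X] {μ vol : Measure X} {Z : Set X} {A B : X → ℝ}

lemma glue_ae_vol (hv : vol Z = 0) :
    glue μ vol Z A B =ᵐ[vol] fun x => A x + (μ.rnDeriv vol x).toReal * B x := by
  have : ∀ᵐ x ∂vol, x ∉ Z := measure_eq_zero_iff_ae_notMem.1 hv
  exact this.mono fun x hx => by simp [glue, hx]

lemma glue_ae_sing (hs : μ.singularPart vol Zᶜ = 0) :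
    glue μ vol Z A B =ᵐ[μ.singularPart vol] B := by
  have : ∀ᵐ x ∂μ.singularPart vol, x ∉ Zᶜ := measure_eq_zero_iff_ae_notMem.1 hs
  exact this.mono fun x hx => by simp [glue, not_not.1 hx]

lemma mul_glue (φ : X → ℝ) (x : X) :
    φ x * glue μ vol Z A B x = glue μ vol Z (fun x => φ x * A x) (fun x => φ x * B x) x := by
  unfold glue; split_ifs <;> ring

variable [SigmaFinite μ]

lemma integrable_density (hB : Integrable B μ) :
    Integrable (fun x => (μ.rnDeriv vol x).toReal * B x) vol := by
  have := (hB.mono_measure (Measure.withDensity_rnDeriv_le μ vol))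
  rwa [integrable_withDensity_iff_integrable_smul' (Measure.measurable_rnDeriv μ vol)
    (Measure.rnDeriv_lt_top μ vol)] at this

lemma integrable_glue (hv : vol Z = 0) (hs : μ.singularPart vol Zᶜ = 0)
    (hA : Integrable A vol) (hB : Integrable B μ) :
    Integrable (glue μ vol Z A B) (μ.singularPart vol + vol) := by
  refine Integrable.add_measure ?_ ?_
  · exact (hB.mono_measure (Measure.singularPart_le μ vol)).congr (glue_ae_sing hs).symm
  · exact (hA.add (integrable_density hB)).congr (glue_ae_vol hv).symm

lemma integral_glue [SigmaFinite vol] (hv : vol Z = 0) (hs : μ.singularPart vol Zᶜ = 0)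
    (hA : Integrable A vol) (hB : Integrable B μ) :
    ∫ x, glue μ vol Z A B x ∂(μ.singularPart vol + vol) = ∫ x, A x ∂vol + ∫ x, B x ∂μ := by
  have hi := integrable_glue hv hs hA hB
  rw [integral_add_measure hi.left_of_add_measure hi.right_of_add_measure,
    integral_congr_ae (glue_ae_sing hs), integral_congr_ae (glue_ae_vol hv),
    integral_add hA (integrable_density hB)]
  have h1 : ∫ x, B x ∂μ = ∫ x, B x ∂(μ.singularPart vol)
      + ∫ x, (μ.rnDeriv vol x).toReal * B x ∂vol := by
    have hB' := hB
    rw [Measure.haveLebesgueDecomposition_add μ vol] at hB'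
    conv_lhs => rw [Measure.haveLebesgueDecomposition_add μ vol]
    rw [integral_add_measure hB'.left_of_add_measure hB'.right_of_add_measure,
      integral_withDensity_eq_integral_toReal_smul (Measure.measurable_rnDeriv μ vol)
        (Measure.rnDeriv_lt_top μ vol)]
    rfl
  rw [h1]; ring

end glue

/-! ### Derivative measures with arbitrary densities -/

/-- A variant of `IsBVOn` in which the derivative of `f` on `Ω` is written as `g μ` for an
arbitrary measure `μ` on `Ω` and a `μ`-integrable matrix field `g`, with no normalisation. -/
structure WeakBV (n k : ℕ) (Ω : Set (EuclideanSpace ℝ (Fin n)))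
    (f : EuclideanSpace ℝ (Fin n) → EuclideanSpace ℝ (Fin k))
    (μ : Measure (EuclideanSpace ℝ (Fin n)))
    (g : EuclideanSpace ℝ (Fin n) → Matrix (Fin k) (Fin n) ℝ) : Prop where
  integrable : IntegrableOn f Ω volume
  concentrated : μ Ωᶜ = 0
  density : ∀ j l, Integrable (fun x => g x j l) μ
  parts : ∀ φ : EuclideanSpace ℝ (Fin n) → ℝ, ContDiff ℝ 1 φ → HasCompactSupport φ →
    tsupport φ ⊆ Ω → ∀ j : Fin k, ∀ l : Fin n,
      ∫ x in Ω, f x j * fderiv ℝ φ x (EuclideanSpace.single l (1:ℝ)) ∂volume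
        = - ∫ x, φ x * g x j l ∂μ

lemma IsBVOn.density_integrable {n k : ℕ} {Ω : Set (EuclideanSpace ℝ (Fin n))}
    {f : EuclideanSpace ℝ (Fin n) → EuclideanSpace ℝ (Fin k)}
    {ν : Measure (EuclideanSpace ℝ (Fin n))}
    {σ : EuclideanSpace ℝ (Fin n) → Matrix (Fin k) (Fin n) ℝ}
    (h : IsBVOn n k Ω f ν σ) (j : Fin k) (l : Fin n) : Integrable (fun x => σ x j l) ν := by
  have : IsFiniteMeasure ν := ⟨h.finite⟩
  refine Integrable.of_bound (h.meas j l).aestronglyMeasurable 1 ?_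
  filter_upwards [h.unit] with x hx
  have h1 : (σ x j l) ^ 2 ≤ ∑ l, (σ x j l) ^ 2 :=
    Finset.single_le_sum (f := fun l => (σ x j l) ^ 2) (fun _ _ => sq_nonneg _) (Finset.mem_univ l)
  have h2 : ∑ l, (σ x j l) ^ 2 ≤ ∑ j, ∑ l, (σ x j l) ^ 2 :=
    Finset.single_le_sum (f := fun j => ∑ l, (σ x j l) ^ 2)
      (fun _ _ => Finset.sum_nonneg fun _ _ => sq_nonneg _) (Finset.mem_univ j)
  rw [Real.norm_eq_abs]
  exact abs_le_one_iff_mul_self_le_one.2 (by nlinarith)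

/-- Polar decomposition `g μ = (g / |g|) (|g| μ)`: if the rank one theorem is known for `f` on `Ω`,
then any density `g` of `Df` has rank at most one `μ`-almost everywhere on null sets. -/
lemma WeakBV.rank_le_one {n k : ℕ} {Ω : Set (EuclideanSpace ℝ (Fin n))}
    {f : EuclideanSpace ℝ (Fin n) → EuclideanSpace ℝ (Fin k)}
    {μ : Measure (EuclideanSpace ℝ (Fin n))}
    {g : EuclideanSpace ℝ (Fin n) → Matrix (Fin k) (Fin n) ℝ}
    (h : WeakBV n k Ω f μ g)
    (hR : ∀ ν σ, IsBVOn n k Ω f ν σ →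
      ∀ᵐ x ∂(ν.singularPart volume), x ∈ Ω → (σ x).rank = 1)
    {N : Set (EuclideanSpace ℝ (Fin n))} (hN : volume N = 0) :
    ∀ᵐ x ∂μ, x ∈ N → (g x).rank ≤ 1 := by
  have hm := fun j l => (h.density j l).aestronglyMeasurable
  let g' : EuclideanSpace ℝ (Fin n) → Matrix (Fin k) (Fin n) ℝ := fun x j l => (hm j l).mk _ x
  have hg'm : ∀ j l, Measurable fun x => g' x j l :=
    fun j l => (hm j l).stronglyMeasurable_mk.measurable
  have hgg : ∀ᵐ x ∂μ, ∀ j l, g x j l = g' x j l := by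
    rw [ae_all_iff]; intro j
    rw [ae_all_iff]; intro l
    exact (hm j l).ae_eq_mk
  have hg'i : ∀ j l, Integrable (fun x => g' x j l) μ := fun j l =>
    (h.density j l).congr (hgg.mono fun x hx => hx j l)
  let s : EuclideanSpace ℝ (Fin n) → ℝ := fun x => √(∑ j, ∑ l, (g' x j l) ^ 2)
  have hsm : Measurable s := by
    refine Measurable.sqrt ?_
    exact Finset.measurable_fun_sum _ fun j _ => Finset.measurable_fun_sum _ fun l _ =>
      (hg'm j l).pow_const 2
  have hs0 : ∀ x, 0 ≤ s x := fun x => Real.sqrt_nonneg _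
  have hnn : ∀ x, 0 ≤ ∑ j, ∑ l, (g' x j l) ^ 2 := fun x =>
    Finset.sum_nonneg fun _ _ => Finset.sum_nonneg fun _ _ => sq_nonneg _
  have hle : ∀ x j l, |g' x j l| ≤ s x := by
    intro x j l
    refine Real.abs_le_sqrt ?_
    exact (Finset.single_le_sum (f := fun l => (g' x j l) ^ 2) (fun _ _ => sq_nonneg _)
      (Finset.mem_univ l)).trans (Finset.single_le_sum (f := fun j => ∑ l, (g' x j l) ^ 2)
      (fun _ _ => Finset.sum_nonneg fun _ _ => sq_nonneg _) (Finset.mem_univ j))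
  have hsle : ∀ x, s x ≤ ∑ j, ∑ l, |g' x j l| := by
    intro x
    refine Real.sqrt_le_iff.2 ⟨by positivity, ?_⟩
    have e1 : ∀ j, ∑ l, (g' x j l) ^ 2 ≤ (∑ l, |g' x j l|) ^ 2 := by
      intro j
      simpa using Finset.sum_sq_le_sq_sum_of_nonneg (s := Finset.univ)
        (f := fun l => |g' x j l|) (fun _ _ => abs_nonneg _)
    refine (Finset.sum_le_sum fun j _ => e1 j).trans ?_
    exact Finset.sum_sq_le_sq_sum_of_nonneg (fun _ _ => by positivity)
  have hsi : Integrable s μ := by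
    refine Integrable.mono' (g := fun x => ∑ j, ∑ l, |g' x j l|) ?_ hsm.aestronglyMeasurable ?_
    · exact integrable_finsetSum _ fun j _ => integrable_finsetSum _ fun l _ => (hg'i j l).abs
    · exact Eventually.of_forall fun x => by
        rw [Real.norm_eq_abs, abs_of_nonneg (hs0 x)]; exact hsle x
  have hsm' : Measurable fun x => ENNReal.ofReal (s x) := hsm.ennreal_ofReal
  have key := hR (μ.withDensity fun x => ENNReal.ofReal (s x)) (fun x => (s x)⁻¹ • g' x)
    { integrable := h.integrable
      finite := by
        rw [withDensity_apply _ MeasurableSet.univ, Measure.restrict_univ]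
        exact (hasFiniteIntegral_iff_ofReal (Eventually.of_forall hs0)).1 hsi.2
      concentrated := withDensity_absolutelyContinuous _ _ h.concentrated
      meas := fun j l => by
        simp only [Matrix.smul_apply, smul_eq_mul]
        exact hsm.inv.mul (hg'm j l)
      unit := by
        rw [ae_withDensity_iff hsm']
        refine Eventually.of_forall fun x hx => ?_
        have hx : 0 < s x := by simpa using hx
        have : (s x) ^ 2 = ∑ j, ∑ l, (g' x j l) ^ 2 := Real.sq_sqrt (hnn x)
        simp only [Matrix.smul_apply, smul_eq_mul, mul_pow]
        simp only [← Finset.mul_sum]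
        rw [← this]
        field_simp
      parts := fun φ h1 h2 h3 j l => by
        rw [h.parts φ h1 h2 h3 j l, integral_withDensity_eq_integral_toReal_smul hsm'
          (Eventually.of_forall fun _ => ENNReal.ofReal_lt_top)]
        congr 1
        refine integral_congr_ae ?_
        filter_upwards [hgg] with x hx
        rw [ENNReal.toReal_ofReal (hs0 x), hx]
        simp only [Matrix.smul_apply, smul_eq_mul]
        by_cases h0 : s x = 0
        · have := hle x j l
          rw [h0] at this
          simp [h0, abs_nonpos_iff.1 this]
        · field_simp }
  have : IsFiniteMeasure (μ.withDensity fun x => ENNReal.ofReal (s x)) := by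
    refine isFiniteMeasure_withDensity ?_
    exact ((hasFiniteIntegral_iff_ofReal (Eventually.of_forall hs0)).1 hsi.2).ne
  have k2 := ae_of_singularPart key hN
  rw [ae_withDensity_iff hsm'] at k2
  have hΩ : ∀ᵐ x ∂μ, x ∉ Ωᶜ := measure_eq_zero_iff_ae_notMem.1 h.concentrated
  filter_upwards [k2, hΩ, hgg] with x hx hxΩ hxg hxN
  have hg : g x = g' x := by ext j l; exact hxg j l
  rw [hg]
  by_cases h0 : s x = 0
  · have : g' x = 0 := by
      ext j l
      have := hle x j l
      rw [h0] at this
      exact abs_nonpos_iff.1 this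
    simp [this]
  · have hp : 0 < s x := lt_of_le_of_ne (hs0 x) (Ne.symm h0)
    have := hx (by simpa using hp) hxN (not_not.1 hxΩ)
    rw [Matrix.rank_smul_of_mem_nonZeroDivisors _
      (mem_nonZeroDivisors_of_ne_zero (inv_ne_zero h0))] at this
    exact this.le

lemma integrable_mul_of_hasCompactSupport {X : Type*} [TopologicalSpace X] [MeasurableSpace X]
    [OpensMeasurableSpace X] {μ : Measure X} {F u : X → ℝ} (hF : Integrable F μ)
    (hu : Continuous u) (hc : HasCompactSupport u) : Integrable (fun x => u x * F x) μ := by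
  obtain ⟨C, hC⟩ := hc.exists_bound_of_continuous hu
  exact hF.bdd_mul hu.measurable.aestronglyMeasurable (Eventually.of_forall hC)

lemma continuous_fderiv_dir {E : Type*} [NormedAddCommGroup E] [NormedSpace ℝ E] {φ : E → ℝ}
    (h : ContDiff ℝ 1 φ) (v : E) : Continuous fun x => fderiv ℝ φ x v :=
  (h.continuous_fderiv (by norm_num)).clm_apply continuous_const

lemma integrable_coord {X : Type*} [MeasurableSpace X] {μ : Measure X} {k : ℕ}
    {f : X → EuclideanSpace ℝ (Fin k)} (hf : Integrable f μ) (j : Fin k) :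
    Integrable (fun x => f x j) μ :=
  (EuclideanSpace.proj (𝕜 := ℝ) j).integrable_comp hf

/-! ### From the whole space to the disc -/

/-- Multiplication by a cut-off function `χ`: on the carrier `Z` of the singular part of `|Df|`,
the derivative of `χ f` has density `χ σ`; elsewhere the extra term `f ⊗ ∇χ` appears. -/
lemma weakBV_cutoff {n k : ℕ} {Ω : Set (EuclideanSpace ℝ (Fin n))} (hΩ : MeasurableSet Ω)
    {f : EuclideanSpace ℝ (Fin n) → EuclideanSpace ℝ (Fin k)}
    {ν : Measure (EuclideanSpace ℝ (Fin n))}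
    {σ : EuclideanSpace ℝ (Fin n) → Matrix (Fin k) (Fin n) ℝ}
    (h : IsBVOn n k Ω f ν σ) {χ : EuclideanSpace ℝ (Fin n) → ℝ} (hχ : ContDiff ℝ 1 χ)
    (hχc : HasCompactSupport χ) (hχΩ : tsupport χ ⊆ Ω)
    {Z : Set (EuclideanSpace ℝ (Fin n))} (hv : volume Z = 0)
    (hs : ν.singularPart volume Zᶜ = 0) :
    WeakBV n k Set.univ (fun x => χ x • Ω.indicator f x) (ν.singularPart volume + volume)
      (fun x j l => glue ν volume Z
        (fun x => fderiv ℝ χ x (EuclideanSpace.single l (1:ℝ)) * (Ω.indicator f x) j)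
        (fun x => χ x * σ x j l) x) := by
  have : IsFiniteMeasure ν := ⟨h.finite⟩
  have hf0 : Integrable (Ω.indicator f) volume := h.integrable.integrable_indicator hΩ
  have hf0j := fun j => integrable_coord hf0 j
  have hχ' : ∀ l, HasCompactSupport fun x => fderiv ℝ χ x (EuclideanSpace.single l (1:ℝ)) :=
    fun l => hχc.fderiv_apply (𝕜 := ℝ) _
  have hA : ∀ j l, Integrable (fun x => fderiv ℝ χ x (EuclideanSpace.single l (1:ℝ))
      * (Ω.indicator f x) j) volume := fun j l =>
    integrable_mul_of_hasCompactSupport (hf0j j) (continuous_fderiv_dir hχ _) (hχ' l)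
  have hB : ∀ j l, Integrable (fun x => χ x * σ x j l) ν := fun j l =>
    integrable_mul_of_hasCompactSupport (h.density_integrable j l) hχ.continuous hχc
  refine ⟨?_, by simp, fun j l => integrable_glue hv hs (hA j l) (hB j l), ?_⟩
  · obtain ⟨C, hC⟩ := hχc.exists_bound_of_continuous hχ.continuous
    exact (hf0.bdd_smul C hχ.continuous.aestronglyMeasurable
      (Eventually.of_forall hC)).integrableOn
  · intro φ h1 h2 _ j l
    have hp := h.parts (fun x => χ x * φ x) (hχ.mul h1) (hχc.mul_right)
      ((tsupport_mul_subset_left).trans hχΩ) j l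
    have hd : ∀ x, fderiv ℝ (fun x => χ x * φ x) x (EuclideanSpace.single l (1:ℝ))
        = χ x * fderiv ℝ φ x (EuclideanSpace.single l (1:ℝ))
          + φ x * fderiv ℝ χ x (EuclideanSpace.single l (1:ℝ)) := by
      intro x
      rw [fderiv_fun_mul (hχ.differentiable (by norm_num) x) (h1.differentiable (by norm_num) x)]
      simp
    have hI : ∫ x in Ω, f x j * fderiv ℝ (fun x => χ x * φ x) x (EuclideanSpace.single l (1:ℝ))
        = ∫ x, (χ x * fderiv ℝ φ x (EuclideanSpace.single l (1:ℝ))) * (Ω.indicator f x) j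
          + φ x * (fderiv ℝ χ x (EuclideanSpace.single l (1:ℝ)) * (Ω.indicator f x) j) := by
      rw [← integral_indicator hΩ]
      congr 1
      ext x
      by_cases hx : x ∈ Ω
      · simp only [Set.indicator_of_mem hx, hd]; ring
      · simp [Set.indicator_of_notMem hx]
    have hi1 : Integrable (fun x => (χ x * fderiv ℝ φ x (EuclideanSpace.single l (1:ℝ)))
        * (Ω.indicator f x) j) volume :=
      integrable_mul_of_hasCompactSupport (hf0j j)
        (hχ.continuous.mul (continuous_fderiv_dir h1 _)) hχc.mul_right
    rw [hI, integral_add hi1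
      (integrable_mul_of_hasCompactSupport (hA j l) h1.continuous h2)] at hp
    simp only [mul_glue]
    rw [integral_glue hv hs (integrable_mul_of_hasCompactSupport (hA j l) h1.continuous h2)
      (integrable_mul_of_hasCompactSupport (hB j l) h1.continuous h2), Measure.restrict_univ]
    have e1 : ∀ x, (χ x • Ω.indicator f x) j * fderiv ℝ φ x (EuclideanSpace.single l (1:ℝ))
        = (χ x * fderiv ℝ φ x (EuclideanSpace.single l (1:ℝ))) * (Ω.indicator f x) j := by
      intro x; simp only [PiLp.smul_apply, smul_eq_mul]; ring
    have e2 : ∀ x, φ x * (χ x * σ x j l) = χ x * φ x * σ x j l := fun x => by ring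
    simp only [e1, e2]
    linarith

/-- The rank one theorem on the whole space implies the rank one theorem on the unit ball. -/
lemma rank_one_ball_of_univ {n k : ℕ}
    (hR : ∀ f ν σ, IsBVOn n k Set.univ f ν σ →
      ∀ᵐ x ∂(ν.singularPart volume), (σ x).rank = 1)
    (f : EuclideanSpace ℝ (Fin n) → EuclideanSpace ℝ (Fin k))
    (ν : Measure (EuclideanSpace ℝ (Fin n)))
    (σ : EuclideanSpace ℝ (Fin n) → Matrix (Fin k) (Fin n) ℝ)
    (h : IsBVOn n k (Metric.ball 0 1) f ν σ) :
    ∀ᵐ x ∂(ν.singularPart volume), x ∈ Metric.ball (0 : EuclideanSpace ℝ (Fin n)) 1 →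
      (σ x).rank = 1 := by
  have : IsFiniteMeasure ν := ⟨h.finite⟩
  obtain ⟨Z, -, hv, hs⟩ := exists_carrier ν (volume : Measure (EuclideanSpace ℝ (Fin n)))
  have hr : ∀ m : ℕ, (0:ℝ) < 1 - 1 / (m + 2) ∧ (1:ℝ) - 1 / (m + 2) < 1 := by
    intro m
    have : (1:ℝ) / (m + 2) ≤ 1 / 2 :=
      one_div_le_one_div_of_le (by norm_num) (by linarith [(m.cast_nonneg : (0:ℝ) ≤ m)])
    exact ⟨by linarith, by simp; positivity⟩
  have hcut : ∀ m : ℕ, ∀ᵐ x ∂(ν.singularPart volume),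
      x ∈ Metric.closedBall (0 : EuclideanSpace ℝ (Fin n)) (1 - 1 / (m + 2)) →
        (σ x).rank ≤ 1 := by
    intro m
    let χ : ContDiffBump (0 : EuclideanSpace ℝ (Fin n)) :=
      ⟨1 - 1 / (m + 2), ((1 - 1 / (m + 2)) + 1) / 2, (hr m).1, by linarith [(hr m).2]⟩
    have hw := weakBV_cutoff measurableSet_ball h (χ := χ) χ.contDiff χ.hasCompactSupport
      (by
        rw [χ.tsupport_eq]
        exact Metric.closedBall_subset_ball (by
          change ((1 - 1 / (m + 2)) + 1) / 2 < (1:ℝ)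
          linarith [(hr m).2]))
      hv hs
    have := hw.rank_le_one (fun ν σ hb => (hR _ ν σ hb).mono fun x hx _ => hx) hv
    rw [ae_add_measure_iff] at this
    have hZ : ∀ᵐ x ∂ν.singularPart volume, x ∉ Zᶜ := measure_eq_zero_iff_ae_notMem.1 hs
    filter_upwards [this.1, hZ] with x hx hxZ hxr
    have hxZ := not_not.1 hxZ
    have h1 : χ x = 1 := χ.one_of_mem_closedBall hxr
    refine le_of_eq_of_le (congrArg Matrix.rank ?_) (hx hxZ)
    ext j l
    simp [glue, hxZ, h1]
  have hu := ae_mono (Measure.singularPart_le ν volume) h.unit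
  filter_upwards [ae_all_iff.2 hcut, hu] with x hx hxu hxb
  obtain ⟨m, hm⟩ : ∃ m : ℕ, 1 / ((m:ℝ) + 1) < 1 - ‖x‖ :=
    exists_nat_one_div_lt (by rw [mem_ball_zero_iff] at hxb; linarith)
  have h1 : (σ x).rank ≤ 1 := by
    refine hx m ?_
    rw [mem_closedBall_zero_iff]
    have : (1:ℝ) / (m + 2) ≤ 1 / (m + 1) :=
      one_div_le_one_div_of_le (by positivity) (by linarith)
    linarith
  have h2 := rank_ne_zero_of_unit _ hxu
  omega

/-! ### From the disc to the plane -/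

/-- Translating `f`, `μ` and `g` by `c` and restricting to the unit ball. -/
lemma weakBV_translate {n k : ℕ}
    {f : EuclideanSpace ℝ (Fin n) → EuclideanSpace ℝ (Fin k)}
    {μ : Measure (EuclideanSpace ℝ (Fin n))}
    {g : EuclideanSpace ℝ (Fin n) → Matrix (Fin k) (Fin n) ℝ}
    (h : WeakBV n k Set.univ f μ g) (c : EuclideanSpace ℝ (Fin n)) :
    WeakBV n k (Metric.ball 0 1) (fun x => f (x + c))
      ((μ.map (fun x => x - c)).restrict (Metric.ball 0 1)) (fun x => g (x + c)) := by
  have hf : Integrable f volume := by simpa using h.integrable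
  have he : MeasurableEmbedding (fun x : EuclideanSpace ℝ (Fin n) => x - c) :=
    (Homeomorph.subRight c).measurableEmbedding
  refine ⟨(hf.comp_add_right c).integrableOn, ?_, ?_, ?_⟩
  · rw [Measure.restrict_apply measurableSet_ball.compl]; simp
  · intro j l
    refine Integrable.restrict ?_
    rw [he.integrable_map_iff]
    simpa [Function.comp_def] using h.density j l
  · intro φ h1 h2 h3 j l
    have hp := h.parts (fun x => φ (x - c)) (h1.comp (contDiff_id.sub contDiff_const))
      (h2.comp_homeomorph (Homeomorph.subRight c)) (Set.subset_univ _) j l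
    have hz : ∀ x ∉ Metric.ball (0 : EuclideanSpace ℝ (Fin n)) 1, φ x = 0 := fun x hx =>
      image_eq_zero_of_notMem_tsupport fun h => hx (h3 h)
    have hz' : ∀ x ∉ Metric.ball (0 : EuclideanSpace ℝ (Fin n)) 1, fderiv ℝ φ x = 0 := fun x hx =>
      image_eq_zero_of_notMem_tsupport fun h => hx (h3 (tsupport_fderiv_subset ℝ h))
    rw [setIntegral_eq_integral_of_forall_compl_eq_zero (fun x hx => by simp [hz' x hx]),
      setIntegral_eq_integral_of_forall_compl_eq_zero (fun x hx => by simp [hz x hx]),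
      he.integral_map]
    rw [Measure.restrict_univ,
      ← integral_add_right_eq_self _ c] at hp
    simpa [fderiv_comp_sub] using hp

/-- If the rank one theorem holds on the unit disc, then the density of the derivative of a planar
`BV` function is singular almost everywhere on null sets. -/
lemma det_eq_zero_of_disc
    (hD : ∀ f ν σ, IsBVOn 2 2 (Metric.ball (0 : EuclideanSpace ℝ (Fin 2)) 1) f ν σ →
      ∀ᵐ x ∂(ν.singularPart volume),
        x ∈ Metric.ball (0 : EuclideanSpace ℝ (Fin 2)) 1 → (σ x).rank = 1)
    {f : EuclideanSpace ℝ (Fin 2) → EuclideanSpace ℝ (Fin 2)}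
    {μ : Measure (EuclideanSpace ℝ (Fin 2))}
    {g : EuclideanSpace ℝ (Fin 2) → Matrix (Fin 2) (Fin 2) ℝ}
    (h : WeakBV 2 2 Set.univ f μ g)
    {N : Set (EuclideanSpace ℝ (Fin 2))} (hN : volume N = 0) :
    ∀ᵐ x ∂μ, x ∈ N → (g x).det = 0 := by
  have hc : ∀ c : EuclideanSpace ℝ (Fin 2), ∀ᵐ x ∂μ, x ∈ Metric.ball c 1 → x ∈ N →
      (g x).det = 0 := by
    intro c
    have he : MeasurableEmbedding (fun x : EuclideanSpace ℝ (Fin 2) => x - c) :=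
      (Homeomorph.subRight c).measurableEmbedding
    have hN' : volume ((fun x => x + c) ⁻¹' N) = 0 := by
      rw [measure_preimage_add_right]; exact hN
    have := (weakBV_translate h c).rank_le_one (hD _) hN'
    rw [ae_restrict_iff' measurableSet_ball, he.ae_map_iff] at this
    filter_upwards [this] with x hx hxc hxN
    refine det_eq_zero_of_rank_le_one _ ?_
    simpa using hx (by simpa [dist_eq_norm] using hxc) (by simpa using hxN)
  have := ae_all_iff.2 fun m : ℕ => hc (TopologicalSpace.denseSeq _ m)
  filter_upwards [this] with x hx hxN
  obtain ⟨m, hy⟩ := (TopologicalSpace.denseRange_denseSeq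
    (EuclideanSpace ℝ (Fin 2))).exists_mem_open Metric.isOpen_ball
      (Metric.nonempty_ball.2 one_pos : (Metric.ball x 1).Nonempty)
  exact hx m (by rw [Metric.mem_ball, dist_comm]; exact hy) hxN

/-! ### Countably many test functions -/

/-- Countably many `C¹_c` functions approximate every `C¹_c` function, boundedly and pointwise
together with the derivative. This comes from the second countability of the compact-open
topology on the space of pairs `(φ, dφ)`, applied to functions supported in a fixed ball. -/
lemma exists_countable_test (E : Type*) [NormedAddCommGroup E] [NormedSpace ℝ E]
    [FiniteDimensional ℝ E] :
    ∃ T : Set (E → ℝ), T.Countable ∧ (∀ φ ∈ T, ContDiff ℝ 1 φ ∧ HasCompactSupport φ) ∧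
      ∀ φ : E → ℝ, ContDiff ℝ 1 φ → HasCompactSupport φ →
        ∃ u : ℕ → E → ℝ, (∀ i, u i ∈ T) ∧
          (∃ C : ℝ, ∀ᶠ i in atTop, ∀ x, ‖u i x‖ ≤ C ∧ ‖fderiv ℝ (u i) x‖ ≤ C) ∧
          (∀ x, Tendsto (fun i => u i x) atTop (nhds (φ x))) ∧
          (∀ x, Tendsto (fun i => fderiv ℝ (u i) x) atTop (nhds (fderiv ℝ φ x))) := by
  have : ProperSpace E := FiniteDimensional.proper ℝ E
  have : ProperSpace (E →L[ℝ] ℝ) := FiniteDimensional.proper ℝ _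
  -- the set of jets of test functions supported in the ball of radius `R`
  let S : ℕ → Set C(E, ℝ × (E →L[ℝ] ℝ)) := fun R =>
    {v | ∃ φ : E → ℝ, ContDiff ℝ 1 φ ∧ tsupport φ ⊆ Metric.closedBall 0 R ∧
      ∀ x, v x = (φ x, fderiv ℝ φ x)}
  have hS : ∀ R, ∃ D : Set C(E, ℝ × (E →L[ℝ] ℝ)), D ⊆ S R ∧ D.Countable ∧ S R ⊆ closure D := by
    intro R
    obtain ⟨D, h1, h2, h3⟩ :=
      (TopologicalSpace.IsSeparable.of_separableSpace (S R)).exists_countable_dense_subset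
    exact ⟨D, h1, h2, h3⟩
  choose D hDS hDc hDd using hS
  refine ⟨⋃ R, (fun v : C(E, ℝ × (E →L[ℝ] ℝ)) => fun x => (v x).1) '' D R,
    Set.countable_iUnion fun R => (hDc R).image _, ?_, ?_⟩
  · intro φ hφ
    obtain ⟨R, v, hv, rfl⟩ := Set.mem_iUnion.1 hφ
    obtain ⟨ψ, h1, h2, h3⟩ := hDS R hv
    have : (fun x => (v x).1) = ψ := by ext x; simp [h3]
    simp only [this]
    exact ⟨h1, HasCompactSupport.of_support_subset_isCompact (isCompact_closedBall 0 (R:ℝ))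
      ((subset_tsupport _).trans h2)⟩
  · intro φ h1 h2
    obtain ⟨r, hr⟩ := h2.isCompact.isBounded.subset_closedBall 0
    obtain ⟨R, hR⟩ := exists_nat_ge r
    have hsub : tsupport φ ⊆ Metric.closedBall 0 (R:ℝ) :=
      hr.trans (Metric.closedBall_subset_closedBall hR)
    let v : C(E, ℝ × (E →L[ℝ] ℝ)) :=
      ⟨fun x => (φ x, fderiv ℝ φ x), h1.continuous.prodMk (h1.continuous_fderiv (by norm_num))⟩
    have hv : v ∈ S R := ⟨φ, h1, hsub, fun x => rfl⟩
    obtain ⟨w, hwD, hw⟩ := mem_closure_iff_seq_limit.1 (hDd R hv)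
    choose ψ hψ1 hψ2 hψ3 using fun i => hDS R (hwD i)
    have hwψ : ∀ i, (fun x => (w i x).1) = ψ i := fun i => by ext x; simp [hψ3]
    have hpt : ∀ x, Tendsto (fun i => w i x) atTop (nhds (v x)) := fun x =>
      ((continuous_eval_const (F := C(E, ℝ × (E →L[ℝ] ℝ))) x).tendsto v).comp hw
    refine ⟨ψ, fun i => Set.mem_iUnion.2 ⟨R, w i, hwD i, hwψ i⟩, ?_, ?_, ?_⟩
    · have hK := isCompact_closedBall (0:E) (R:ℝ)
      have hu := ContinuousMap.tendsto_iff_forall_isCompact_tendstoUniformlyOn.1 hw _ hK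
      rw [Metric.tendstoUniformlyOn_iff] at hu
      obtain ⟨C, hC⟩ := hK.exists_bound_of_continuousOn v.continuous.continuousOn
      refine ⟨|C| + 1, ?_⟩
      filter_upwards [hu 1 one_pos] with i hi x
      by_cases hx : x ∈ Metric.closedBall (0:E) (R:ℝ)
      · have hb : ‖w i x‖ ≤ |C| + 1 := by
          have h3 := hi x hx
          rw [dist_eq_norm'] at h3
          have h4 := norm_le_insert' (w i x) (v x)
          linarith [hC x hx, le_abs_self C]
        rw [hψ3, Prod.norm_def] at hb
        exact ⟨(le_max_left _ _).trans hb, (le_max_right _ _).trans hb⟩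
      · have hx' : x ∉ tsupport (ψ i) := fun h => hx (hψ2 i h)
        have e2 : fderiv ℝ (ψ i) x = 0 := image_eq_zero_of_notMem_tsupport
          fun h => hx' (tsupport_fderiv_subset ℝ h)
        rw [image_eq_zero_of_notMem_tsupport hx', e2]
        simp only [norm_zero]
        exact ⟨by positivity, by positivity⟩
    · intro x
      have := (continuous_fst.tendsto _).comp (hpt x)
      simpa [Function.comp_def, hψ3, v] using this
    · intro x
      have := (continuous_snd.tendsto _).comp (hpt x)
      simpa [Function.comp_def, hψ3, v] using this

/-- The integration by parts formula passes to limits of test functions as in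
`exists_countable_test`. -/
lemma parts_of_approx {E : Type*} [NormedAddCommGroup E] [NormedSpace ℝ E]
    [FiniteDimensional ℝ E] [MeasurableSpace E] [BorelSpace E] {vol μ : Measure E} {f g : E → ℝ}
    (hf : Integrable f vol) (hg : Integrable g μ) (e : E) {u : ℕ → E → ℝ} {φ : E → ℝ}
    (hu : ∀ i, ContDiff ℝ 1 (u i)) {C : ℝ}
    (hC : ∀ᶠ i in atTop, ∀ x, ‖u i x‖ ≤ C ∧ ‖fderiv ℝ (u i) x‖ ≤ C)
    (h0 : ∀ x, Tendsto (fun i => u i x) atTop (nhds (φ x)))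
    (h1 : ∀ x, Tendsto (fun i => fderiv ℝ (u i) x) atTop (nhds (fderiv ℝ φ x)))
    (hp : ∀ i, ∫ x, f x * fderiv ℝ (u i) x e ∂vol = - ∫ x, u i x * g x ∂μ) :
    ∫ x, f x * fderiv ℝ φ x e ∂vol = - ∫ x, φ x * g x ∂μ := by
  have l1 : Tendsto (fun i => ∫ x, f x * fderiv ℝ (u i) x e ∂vol) atTop
      (nhds (∫ x, f x * fderiv ℝ φ x e ∂vol)) := by
    refine tendsto_integral_filter_of_dominated_convergence (fun x => ‖f x‖ * (C * ‖e‖)) ?_ ?_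
      (hf.norm.mul_const _) ?_
    · exact Eventually.of_forall fun i => hf.aestronglyMeasurable.mul
        (continuous_fderiv_dir (hu i) e).measurable.aestronglyMeasurable
    · filter_upwards [hC] with i hi
      refine Eventually.of_forall fun x => ?_
      rw [norm_mul]
      gcongr
      exact ((fderiv ℝ (u i) x).le_opNorm e).trans (by gcongr; exact (hi x).2)
    · refine Eventually.of_forall fun x => Tendsto.const_mul _ ?_
      exact (((ContinuousLinearMap.apply ℝ ℝ e).continuous.tendsto _).comp (h1 x))
  have l2 : Tendsto (fun i => ∫ x, u i x * g x ∂μ) atTop (nhds (∫ x, φ x * g x ∂μ)) := by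
    refine tendsto_integral_filter_of_dominated_convergence (fun x => C * ‖g x‖) ?_ ?_
      (hg.norm.const_mul _) ?_
    · exact Eventually.of_forall fun i =>
        (hu i).continuous.measurable.aestronglyMeasurable.mul hg.aestronglyMeasurable
    · filter_upwards [hC] with i hi
      refine Eventually.of_forall fun x => ?_
      rw [norm_mul]
      gcongr
      exact (hi x).1
    · exact Eventually.of_forall fun x => (h0 x).mul_const _
  simp only [hp] at l1
  exact tendsto_nhds_unique l1 l2.neg

/-! ### Slicing -/

/-- Slicing into planes. The measure `ρ` is disintegrated as `τ ⊗ κ` over its marginal `τ` on `F`.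
On the part of `τ` singular to Lebesgue measure the sliced derivative vanishes; on the absolutely
continuous part `θ dz`, almost every slice of `h` is a planar `BV` function with derivative
`θ(z) g(z, ·) κ_z`, and the planar result applies, since almost every slice of a null set
is null. -/
lemma det_eq_zero_of_slices {F : Type*} [NormedAddCommGroup F] [NormedSpace ℝ F]
    [FiniteDimensional ℝ F] [MeasurableSpace F] [BorelSpace F] (vF : Measure F) [SigmaFinite vF]
    (hP : ∀ f μ g, WeakBV 2 2 Set.univ f μ g → ∀ N, volume N = 0 →
      ∀ᵐ x ∂μ, x ∈ N → (g x).det = 0)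
    {h : F × EuclideanSpace ℝ (Fin 2) → EuclideanSpace ℝ (Fin 2)}
    (hh : Integrable h (vF.prod volume))
    {ρ : Measure (F × EuclideanSpace ℝ (Fin 2))} [IsFiniteMeasure ρ]
    {g : F × EuclideanSpace ℝ (Fin 2) → Matrix (Fin 2) (Fin 2) ℝ}
    (hgm : ∀ j l, Measurable fun p => g p j l) (hgi : ∀ j l, Integrable (fun p => g p j l) ρ)
    (hparts : ∀ ψ : F → ℝ, ContDiff ℝ 1 ψ → HasCompactSupport ψ →
      ∀ φ : EuclideanSpace ℝ (Fin 2) → ℝ, ContDiff ℝ 1 φ → HasCompactSupport φ → ∀ j l,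
        ∫ p, h p j * (ψ p.1 * fderiv ℝ φ p.2 (EuclideanSpace.single l (1:ℝ))) ∂(vF.prod volume)
          = - ∫ p, ψ p.1 * φ p.2 * g p j l ∂ρ)
    {N : Set (F × EuclideanSpace ℝ (Fin 2))} (hN : MeasurableSet N)
    (hN0 : (vF.prod volume) N = 0) : ∀ᵐ p ∂ρ, p ∈ N → (g p).det = 0 := by
  set τ : Measure F := ρ.fst with hτ
  set κ := ρ.condKernel with hκ
  have hdis : τ.compProd κ = ρ := ρ.disintegrate ρ.condKernel
  obtain ⟨Z, -, hv, hs⟩ := exists_carrier τ vF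
  -- the integration by parts formula on slices, for a fixed test function
  have step : ∀ φ : EuclideanSpace ℝ (Fin 2) → ℝ, ContDiff ℝ 1 φ → HasCompactSupport φ →
      ∀ j l, (∀ᵐ z ∂τ.singularPart vF, ∫ y, φ y * g (z, y) j l ∂κ z = 0) ∧
        ∀ᵐ z ∂vF, (∫ y, h (z, y) j * fderiv ℝ φ y (EuclideanSpace.single l (1:ℝ)))
          + (τ.rnDeriv vF z).toReal * ∫ y, φ y * g (z, y) j l ∂κ z = 0 := by
    intro φ h1 h2 j l
    obtain ⟨C0, hC0⟩ := h2.exists_bound_of_continuous h1.continuous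
    obtain ⟨C1, hC1⟩ := (h2.fderiv_apply (𝕜 := ℝ)
      (EuclideanSpace.single l (1:ℝ))).exists_bound_of_continuous (continuous_fderiv_dir h1 _)
    have hi1 : Integrable (fun p : F × EuclideanSpace ℝ (Fin 2) =>
        h p j * fderiv ℝ φ p.2 (EuclideanSpace.single l (1:ℝ))) (vF.prod volume) :=
      (integrable_coord hh j).mul_bdd (c := C1)
        ((continuous_fderiv_dir h1 _).comp continuous_snd).measurable.aestronglyMeasurable
        (Eventually.of_forall fun p => hC1 p.2)
    have hi2 : Integrable (fun p : F × EuclideanSpace ℝ (Fin 2) => φ p.2 * g p j l) ρ :=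
      (hgi j l).bdd_mul (c := C0)
        (h1.continuous.comp continuous_snd).measurable.aestronglyMeasurable
        (Eventually.of_forall fun p => hC0 p.2)
    have hA := hi1.integral_prod_left
    have hB : Integrable (fun z => ∫ y, φ y * g (z, y) j l ∂κ z) τ := hi2.integral_condKernel
    have hW : ∀ᵐ z ∂(τ.singularPart vF + vF), glue τ vF Z
        (fun z => ∫ y, h (z, y) j * fderiv ℝ φ y (EuclideanSpace.single l (1:ℝ)))
        (fun z => ∫ y, φ y * g (z, y) j l ∂κ z) z = 0 := by
      refine ae_eq_zero_of_integral_contDiff_smul_eq_zero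
        (integrable_glue hv hs hA hB).locallyIntegrable fun ψ hψ hψc => ?_
      have hψ1 : ContDiff ℝ 1 ψ := hψ.of_le (by exact_mod_cast le_top)
      obtain ⟨C2, hC2⟩ := hψc.exists_bound_of_continuous hψ1.continuous
      simp only [smul_eq_mul, mul_glue]
      rw [integral_glue hv hs (integrable_mul_of_hasCompactSupport hA hψ1.continuous hψc)
        (integrable_mul_of_hasCompactSupport hB hψ1.continuous hψc)]
      have hp := hparts ψ hψ1 hψc φ h1 h2 j l
      have hi3 : Integrable (fun p : F × EuclideanSpace ℝ (Fin 2) =>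
          ψ p.1 * (h p j * fderiv ℝ φ p.2 (EuclideanSpace.single l (1:ℝ)))) (vF.prod volume) :=
        hi1.bdd_mul (c := C2)
          (hψ1.continuous.comp continuous_fst).measurable.aestronglyMeasurable
          (Eventually.of_forall fun p => hC2 p.1)
      have hi4 : Integrable (fun p : F × EuclideanSpace ℝ (Fin 2) =>
          ψ p.1 * (φ p.2 * g p j l)) ρ :=
        hi2.bdd_mul (c := C2)
          (hψ1.continuous.comp continuous_fst).measurable.aestronglyMeasurable
          (Eventually.of_forall fun p => hC2 p.1)
      have e3 := integral_prod _ hi3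
      have e4 := Measure.integral_condKernel hi4
      simp only [integral_const_mul] at e3 e4
      rw [← e3, hκ, hτ, e4]
      have e5 : ∀ p : F × EuclideanSpace ℝ (Fin 2),
          h p j * (ψ p.1 * fderiv ℝ φ p.2 (EuclideanSpace.single l (1:ℝ)))
          = ψ p.1 * (h p j * fderiv ℝ φ p.2 (EuclideanSpace.single l (1:ℝ))) := fun p => by ring
      simp only [e5, mul_assoc] at hp
      rw [hp]; ring
    rw [ae_add_measure_iff] at hW
    refine ⟨?_, ?_⟩
    · filter_upwards [hW.1, glue_ae_sing (A := fun z => ∫ y, h (z, y) j * fderiv ℝ φ y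
        (EuclideanSpace.single l (1:ℝ))) (B := fun z => ∫ y, φ y * g (z, y) j l ∂κ z) hs]
        with z hz1 hz2
      rw [← hz2, hz1]
    · filter_upwards [hW.2, glue_ae_vol (μ := τ) (A := fun z => ∫ y, h (z, y) j * fderiv ℝ φ y
        (EuclideanSpace.single l (1:ℝ))) (B := fun z => ∫ y, φ y * g (z, y) j l ∂κ z) hv]
        with z hz1 hz2
      rw [← hz2, hz1]
  obtain ⟨T, hTc, hT, hTa⟩ := exists_countable_test (EuclideanSpace ℝ (Fin 2))
  have hS : ∀ᵐ z ∂τ.singularPart vF, ∀ φ ∈ T, ∀ j l, ∫ y, φ y * g (z, y) j l ∂κ z = 0 := by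
    rw [ae_ball_iff hTc]; intro φ hφ
    rw [ae_all_iff]; intro j
    rw [ae_all_iff]; intro l
    exact (step φ (hT φ hφ).1 (hT φ hφ).2 j l).1
  have hV : ∀ᵐ z ∂vF, ∀ φ ∈ T, ∀ j l,
      (∫ y, h (z, y) j * fderiv ℝ φ y (EuclideanSpace.single l (1:ℝ)))
          + (τ.rnDeriv vF z).toReal * ∫ y, φ y * g (z, y) j l ∂κ z = 0 := by
    rw [ae_ball_iff hTc]; intro φ hφ
    rw [ae_all_iff]; intro j
    rw [ae_all_iff]; intro l
    exact (step φ (hT φ hφ).1 (hT φ hφ).2 j l).2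
  have hgz : ∀ᵐ z ∂τ, ∀ j l, Integrable (fun y => g (z, y) j l) (κ z) := by
    rw [ae_all_iff]; intro j
    rw [ae_all_iff]; intro l
    exact (hgi j l).condKernel_ae
  have hmeas : MeasurableSet {p | p ∈ N → (g p).det = 0} := by
    have hd : Measurable fun p => (g p).det := by
      simp only [Matrix.det_fin_two]
      exact ((hgm 0 0).mul (hgm 1 1)).sub ((hgm 0 1).mul (hgm 1 0))
    have : {p | p ∈ N → (g p).det = 0} = Nᶜ ∪ {p | (g p).det = 0} := by
      ext p; simp [imp_iff_not_or]
    rw [this]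
    exact hN.compl.union (hd (measurableSet_singleton 0))
  rw [← hdis, Measure.ae_compProd_iff hmeas, Measure.haveLebesgueDecomposition_add τ vF,
    ae_add_measure_iff]
  constructor
  · filter_upwards [hS, ae_mono (Measure.singularPart_le τ vF) hgz] with z hz hzi
    have hg0 : ∀ j l, ∀ᵐ y ∂κ z, g (z, y) j l = 0 := by
      intro j l
      refine ae_eq_zero_of_integral_contDiff_smul_eq_zero (hzi j l).locallyIntegrable
        fun φ hφ hφc => ?_
      obtain ⟨u, huT, ⟨C, hC⟩, hu0, hu1⟩ := hTa φ (hφ.of_le (by exact_mod_cast le_top)) hφc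
      have := parts_of_approx (vol := (0 : Measure (EuclideanSpace ℝ (Fin 2)))) (f := 0)
        (integrable_zero _ _ _) (hzi j l) 0 (fun i => (hT _ (huT i)).1) hC hu0 hu1
        (fun i => by simp [hz _ (huT i) j l])
      simpa using this
    filter_upwards [hg0 0 0, hg0 0 1] with y h00 h01 _
    simp [Matrix.det_fin_two, h00, h01]
  · have hgz' : ∀ᵐ z ∂vF.withDensity (τ.rnDeriv vF), ∀ j l,
        Integrable (fun y => g (z, y) j l) (κ z) :=
      ae_mono (Measure.withDensity_rnDeriv_le τ vF) hgz
    rw [ae_withDensity_iff (Measure.measurable_rnDeriv τ vF)] at hgz' ⊢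
    filter_upwards [hV, hgz', hh.prod_right_ae, Measure.measure_ae_null_of_prod_null hN0,
      Measure.rnDeriv_lt_top τ vF] with z hz hzi hzh hzN hzt hz0
    have hzi := hzi hz0
    have hθ : (τ.rnDeriv vF z).toReal ≠ 0 := ENNReal.toReal_ne_zero.2 ⟨hz0, hzt.ne⟩
    have hw : WeakBV 2 2 Set.univ (fun y => h (z, y)) (κ z)
        (fun y => (τ.rnDeriv vF z).toReal • g (z, y)) := by
      refine ⟨hzh.integrableOn, by simp, fun j l => ?_, fun φ h1 h2 _ j l => ?_⟩
      · simpa using (hzi j l).const_mul (τ.rnDeriv vF z).toReal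
      · obtain ⟨u, huT, ⟨C, hC⟩, hu0, hu1⟩ := hTa φ h1 h2
        rw [Measure.restrict_univ]
        refine parts_of_approx (integrable_coord hzh j)
          (by simpa using (hzi j l).const_mul (τ.rnDeriv vF z).toReal) _
          (fun i => (hT _ (huT i)).1) hC hu0 hu1 (fun i => ?_)
        have := hz _ (huT i) j l
        rw [← integral_const_mul] at this
        simp only [Matrix.smul_apply, smul_eq_mul]
        simp only [mul_left_comm (u i _)]
        linarith
    filter_upwards [hP _ _ _ hw _ hzN] with y hy hyN
    have := hy hyN
    rw [Matrix.det_smul] at this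
    simpa [hθ] using this

/-! ### From the plane to all dimensions -/

/-- Linear coordinates on `ℝⁿ` that single out the plane spanned by two coordinate vectors. -/
lemma exists_plane_coordinates {n : ℕ} {q : Fin 2 → Fin n} (hq : q 0 ≠ q 1) :
    ∃ e : EuclideanSpace ℝ (Fin n) ≃L[ℝ]
        ({i : Fin n // i ≠ q 0 ∧ i ≠ q 1} → ℝ) × EuclideanSpace ℝ (Fin 2),
      ∀ b, e (EuclideanSpace.single (q b) 1) = (0, EuclideanSpace.single b 1) := by
  let L : EuclideanSpace ℝ (Fin n) ≃ₗ[ℝ]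
      ({i : Fin n // i ≠ q 0 ∧ i ≠ q 1} → ℝ) × EuclideanSpace ℝ (Fin 2) :=
    { toFun := fun x => (fun i => x i, WithLp.toLp 2 fun b => x (q b))
      map_add' := fun x y => by ext <;> simp
      map_smul' := fun c x => by ext <;> simp
      invFun := fun p => WithLp.toLp 2 fun i =>
        if h0 : i = q 0 then p.2 0 else if h1 : i = q 1 then p.2 1 else p.1 ⟨i, h0, h1⟩
      left_inv := fun x => by
        ext i
        by_cases h0 : i = q 0
        · simp [h0]
        · by_cases h1 : i = q 1
          · simp [h1, Ne.symm hq]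
          · simp [h0, h1]
      right_inv := fun p => by
        refine Prod.ext ?_ ?_
        · ext i; simp [i.2.1, i.2.2]
        · ext b
          fin_cases b
          · simp
          · simp [Ne.symm hq] }
  refine ⟨L.toContinuousLinearEquiv, fun b => ?_⟩
  change L _ = _
  refine Prod.ext ?_ ?_
  · ext i
    have : (i : Fin n) ≠ q b := by
      fin_cases b
      · exact i.2.1
      · exact i.2.2
    simp [L, this]
  · ext a
    have : q a = q b ↔ a = b := by
      fin_cases a <;> fin_cases b <;> simp [hq, Ne.symm hq]
    simp [L, this]

/-- If the rank one theorem holds on the unit disc, all `2 × 2` minors of `dDf/d|Df|` vanish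
almost everywhere on null sets. -/
lemma minor_eq_zero
    (hD : ∀ f ν σ, IsBVOn 2 2 (Metric.ball (0 : EuclideanSpace ℝ (Fin 2)) 1) f ν σ →
      ∀ᵐ x ∂(ν.singularPart volume),
        x ∈ Metric.ball (0 : EuclideanSpace ℝ (Fin 2)) 1 → (σ x).rank = 1)
    {n k : ℕ} {f : EuclideanSpace ℝ (Fin n) → EuclideanSpace ℝ (Fin k)}
    {ν : Measure (EuclideanSpace ℝ (Fin n))}
    {σ : EuclideanSpace ℝ (Fin n) → Matrix (Fin k) (Fin n) ℝ}
    (h : IsBVOn n k Set.univ f ν σ) (r : Fin 2 → Fin k) {q : Fin 2 → Fin n} (hq : q 0 ≠ q 1)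
    {N : Set (EuclideanSpace ℝ (Fin n))} (hN : volume N = 0) :
    ∀ᵐ x ∂ν, x ∈ N → ((σ x).submatrix r q).det = 0 := by
  have : IsFiniteMeasure ν := ⟨h.finite⟩
  obtain ⟨e, he⟩ := exists_plane_coordinates hq
  have hem : MeasurableEmbedding e := e.toHomeomorph.measurableEmbedding
  have hf : Integrable f volume := by simpa using h.integrable
  have hHaar := e.isAddHaarMeasure_map (volume : Measure (EuclideanSpace ℝ (Fin n)))
  have hprod : ((volume : Measure ({i : Fin n // i ≠ q 0 ∧ i ≠ q 1} → ℝ)).prod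
      (volume : Measure (EuclideanSpace ℝ (Fin 2)))).IsAddHaarMeasure :=
    Measure.prod.instIsAddHaarMeasure _ _
  -- Lebesgue measure in the new coordinates, up to a positive constant
  obtain ⟨c, hc, hvol⟩ : ∃ c : NNReal, 0 < c ∧
      ((volume : Measure ({i : Fin n // i ≠ q 0 ∧ i ≠ q 1} → ℝ)).prod
        (volume : Measure (EuclideanSpace ℝ (Fin 2)))) = c • Measure.map e volume :=
    ⟨_, Measure.addHaarScalarFactor_pos_of_isAddHaarMeasure _ _,
      Measure.isAddLeftInvariant_eq_smul _ _⟩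
  have hc' : (c : ℝ) ≠ 0 := by exact_mod_cast hc.ne'
  have hρ : IsFiniteMeasure (ν.map e) := inferInstance
  have hfr : Integrable (fun x => WithLp.toLp 2 (fun a => f x (r a)) : EuclideanSpace ℝ (Fin n) →
      EuclideanSpace ℝ (Fin 2)) volume := by
    have hi : Integrable (fun x a => f x (r a)) volume :=
      Integrable.of_eval fun a => integrable_coord hf (r a)
    let T := (PiLp.continuousLinearEquiv 2 ℝ (fun _ : Fin 2 => ℝ)).symm.toContinuousLinearMap
    exact T.integrable_comp hi
  have key := det_eq_zero_of_slices
    (volume : Measure ({i : Fin n // i ≠ q 0 ∧ i ≠ q 1} → ℝ))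
    (fun f μ g hw N hN => det_eq_zero_of_disc hD hw hN)
    (h := fun p => (c:ℝ)⁻¹ • WithLp.toLp 2 (fun a => f (e.symm p) (r a)))
    (ρ := ν.map e) (g := fun p => (σ (e.symm p)).submatrix r q)
    (N := e.symm ⁻¹' (toMeasurable volume N))
    ?_ ?_ ?_ ?_ ?_ ?_
  · rw [hem.ae_map_iff] at key
    filter_upwards [key] with x hx hxN
    simpa using hx (by simpa using subset_toMeasurable _ _ hxN)
  · rw [hvol]
    refine Integrable.smul_measure_nnreal ?_
    rw [hem.integrable_map_iff]
    have := hfr.smul (c:ℝ)⁻¹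
    simp only [Function.comp_def, ContinuousLinearEquiv.symm_apply_apply]
    exact this
  · intro a b
    exact (h.meas (r a) (q b)).comp e.symm.continuous.measurable
  · intro a b
    rw [hem.integrable_map_iff]
    simpa [Function.comp_def] using h.density_integrable (r a) (q b)
  · intro ψ hψ hψc φ hφ hφc a b
    have hsupp : HasCompactSupport fun x => ψ (e x).1 * φ (e x).2 := by
      have : HasCompactSupport fun p : ({i : Fin n // i ≠ q 0 ∧ i ≠ q 1} → ℝ) ×
          EuclideanSpace ℝ (Fin 2) => ψ p.1 * φ p.2 := by
        refine HasCompactSupport.intro (hψc.isCompact.prod hφc.isCompact) fun p hp => ?_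
        rw [Set.mem_prod, not_and_or] at hp
        rcases hp with hp | hp
        · rw [image_eq_zero_of_notMem_tsupport hp, zero_mul]
        · rw [image_eq_zero_of_notMem_tsupport hp, mul_zero]
      exact this.comp_homeomorph e.toHomeomorph
    have hcd : ContDiff ℝ 1 fun x => ψ (e x).1 * φ (e x).2 :=
      (hψ.comp (contDiff_fst.comp e.contDiff)).mul (hφ.comp (contDiff_snd.comp e.contDiff))
    have hp := h.parts _ hcd hsupp (Set.subset_univ _) (r a) (q b)
    have hd : ∀ x, fderiv ℝ (fun x => ψ (e x).1 * φ (e x).2) x (EuclideanSpace.single (q b) (1:ℝ))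
        = ψ (e x).1 * fderiv ℝ φ (e x).2 (EuclideanSpace.single b (1:ℝ)) := by
      intro x
      have d1 : HasFDerivAt (fun x => ψ (e x).1) _ x :=
        ((hψ.differentiable (by norm_num) (e x).1).hasFDerivAt).comp x
          (((ContinuousLinearMap.fst ℝ _ _).comp e.toContinuousLinearMap).hasFDerivAt)
      have d2 : HasFDerivAt (fun x => φ (e x).2) _ x :=
        ((hφ.differentiable (by norm_num) (e x).2).hasFDerivAt).comp x
          (((ContinuousLinearMap.snd ℝ _ _).comp e.toContinuousLinearMap).hasFDerivAt)
      rw [(d1.fun_mul d2).fderiv]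
      simp [he]
    rw [hvol, integral_smul_nnreal_measure, hem.integral_map, hem.integral_map]
    rw [Measure.restrict_univ] at hp
    simp only [hd] at hp
    simp only [ContinuousLinearEquiv.symm_apply_apply, PiLp.smul_apply, smul_eq_mul,
      Matrix.submatrix_apply, mul_assoc, integral_const_mul, NNReal.smul_def] at hp ⊢
    rw [hp]
    field_simp
  · exact e.symm.continuous.measurable (measurableSet_toMeasurable _ _)
  · rw [hvol, Measure.smul_apply, hem.map_apply, ← Set.preimage_comp]
    simp [Function.comp_def, measure_toMeasurable, hN]

/-- If the rank one theorem holds on the unit disc, it holds in all dimensions. -/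
lemma rank_one_of_disc
    (hD : ∀ f ν σ, IsBVOn 2 2 (Metric.ball (0 : EuclideanSpace ℝ (Fin 2)) 1) f ν σ →
      ∀ᵐ x ∂(ν.singularPart volume),
        x ∈ Metric.ball (0 : EuclideanSpace ℝ (Fin 2)) 1 → (σ x).rank = 1)
    {n k : ℕ} {f : EuclideanSpace ℝ (Fin n) → EuclideanSpace ℝ (Fin k)}
    {ν : Measure (EuclideanSpace ℝ (Fin n))}
    {σ : EuclideanSpace ℝ (Fin n) → Matrix (Fin k) (Fin n) ℝ}
    (h : IsBVOn n k Set.univ f ν σ) :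
    ∀ᵐ x ∂(ν.singularPart volume), (σ x).rank = 1 := by
  obtain ⟨Z, -, hv, hs⟩ := exists_carrier ν (volume : Measure (EuclideanSpace ℝ (Fin n)))
  have hall : ∀ᵐ x ∂ν, ∀ i j l m, x ∈ Z → σ x i l * σ x j m - σ x i m * σ x j l = 0 := by
    rw [ae_all_iff]; intro i
    rw [ae_all_iff]; intro j
    rw [ae_all_iff]; intro l
    rw [ae_all_iff]; intro m
    by_cases hlm : l = m
    · exact Eventually.of_forall fun x _ => by rw [hlm]; ring
    · filter_upwards [minor_eq_zero hD h ![i, j] (q := ![l, m]) (by simpa using hlm) hv]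
        with x hx hxZ
      have := hx hxZ
      rw [Matrix.det_fin_two] at this
      simpa using this
  have hle := Measure.singularPart_le ν (volume : Measure (EuclideanSpace ℝ (Fin n)))
  have hZ : ∀ᵐ x ∂ν.singularPart volume, x ∉ Zᶜ := measure_eq_zero_iff_ae_notMem.1 hs
  filter_upwards [ae_mono hle hall, ae_mono hle h.unit, hZ] with x hx hxu hxZ
  have h1 := rank_le_one_of_minors (σ x) fun i j l m => hx i j l m (not_not.1 hxZ)
  have h2 := rank_ne_zero_of_unit _ hxu
  omega

/-- Proposition 3.1: the rank one theorem holds in full generality if and only if it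
holds for planar BV functions on the unit disc `B(0,1) ⊂ ℝ²`. -/
theorem rank_one_reduction_to_plane :
    (∀ (n k : ℕ) (f : EuclideanSpace ℝ (Fin n) → EuclideanSpace ℝ (Fin k))
        (ν : Measure (EuclideanSpace ℝ (Fin n)))
        (σ : EuclideanSpace ℝ (Fin n) → Matrix (Fin k) (Fin n) ℝ),
      IsBVOn n k Set.univ f ν σ →
        ∀ᵐ x ∂(ν.singularPart volume), (σ x).rank = 1)
    ↔
    (∀ (f : EuclideanSpace ℝ (Fin 2) → EuclideanSpace ℝ (Fin 2))
        (ν : Measure (EuclideanSpace ℝ (Fin 2)))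
        (σ : EuclideanSpace ℝ (Fin 2) → Matrix (Fin 2) (Fin 2) ℝ),
      IsBVOn 2 2 (Metric.ball (0 : EuclideanSpace ℝ (Fin 2)) 1) f ν σ →
        ∀ᵐ x ∂(ν.singularPart volume),
          x ∈ Metric.ball (0 : EuclideanSpace ℝ (Fin 2)) 1 → (σ x).rank = 1) := by
  exact ⟨fun h => rank_one_ball_of_univ (h 2 2), fun h _ _ _ _ _ hb => rank_one_of_disc h hb⟩
end
end
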